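/- For every integer ℓ ≥ 2 and every real x > 0, the normalized random variables (K_{ℓ,n} − E[K_{ℓ,n}])/√(Var(K_{ℓ,n})) converge in distribution, as n → ∞, to the standard Gaussian N(0,1); that is, for every bounded continuous function f : ℝ → ℝ, E[f((K_{ℓ,n} − E[K_{ℓ,n}])/√(Var(K_{ℓ,n})))] converges to (1/√(2π)) ∫_{−∞}^{∞} f(s) e^{−s²/2} ds. -/

import Mathlib

open Filter Topology Real MeasureTheory Asymptotics

noncomputable section

/-- Number of joint orbits of the subgroup generated by a tuple of permutations. -/
def kappa {ℓ n : ℕ} (σ : Fin ℓ → Equiv.Perm (Fin n)) : ℕ :=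
  Nat.card (MulAction.orbitRel.Quotient (Subgroup.closure (Set.range σ)) (Fin n))

/-- `Acount ℓ n k` is the number of commuting `ℓ`-tuples of permutations of `{1,…,n}`
with exactly `k` joint orbits. -/
def Acount (ℓ n k : ℕ) : ℕ :=
  Nat.card {σ : Fin ℓ → Equiv.Perm (Fin n) //
    (∀ i j, σ i * σ j = σ j * σ i) ∧ kappa σ = k}

/-- `Hpoly ℓ n x = (1/n!) ∑_k A(ℓ,n,k) x^k`. -/
def Hpoly (ℓ n : ℕ) (x : ℝ) : ℝ :=
  (1 / (n.factorial : ℝ)) * ∑ k ∈ Finset.range (n + 1), (Acount ℓ n k : ℝ) * x ^ k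

/-- Expectation, under the Ewens-like measure `P_{ℓ,n,x}`, of `g(K_{ℓ,n})`. -/
def expectK (ℓ n : ℕ) (x : ℝ) (g : ℕ → ℝ) : ℝ :=
  (∑ k ∈ Finset.range (n + 1), g k * (Acount ℓ n k : ℝ) * x ^ k) /
    (∑ k ∈ Finset.range (n + 1), (Acount ℓ n k : ℝ) * x ^ k)

/-- Mean of `K_{ℓ,n}` under `P_{ℓ,n,x}`. -/
def meanK (ℓ n : ℕ) (x : ℝ) : ℝ := expectK ℓ n x (fun k => (k : ℝ))

/-- Variance of `K_{ℓ,n}` under `P_{ℓ,n,x}`. -/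
def varK (ℓ n : ℕ) (x : ℝ) : ℝ :=
  expectK ℓ n x (fun k => ((k : ℝ) - meanK ℓ n x) ^ 2)

/-- Real Riemann zeta values (as a series), `zetaR s = ∑_{m ≥ 1} m^{-s}`. -/
def zetaR (s : ℝ) : ℝ := ∑' m : ℕ, 1 / ((m : ℝ) + 1) ^ s

/-- The constant `K_ℓ = (ℓ-1)! ζ(2)⋯ζ(ℓ)`. -/
def Kconst (ℓ : ℕ) : ℝ := ((ℓ - 1).factorial : ℝ) * ∏ j ∈ Finset.Icc 2 ℓ, zetaR (j : ℝ)

/-- The multiple series `Z^{[ℓ]}_{α_1,…,α_ℓ}(t)` with complex exponents. -/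
def Zc (ℓ : ℕ) (α : Fin ℓ → ℂ) (t : ℝ) : ℂ :=
  ∑' δ : Fin ℓ → ℕ+,
    (∏ i, ((δ i : ℕ) : ℂ) ^ (α i - 1)) *
      Complex.exp (-(((∏ i, ((δ i : ℕ) : ℝ)) * t : ℝ) : ℂ))

/-- The multiple series `Z^{[ℓ]}_{α_1,…,α_ℓ}(t)` with real exponents. -/
def Zr (ℓ : ℕ) (α : Fin ℓ → ℝ) (t : ℝ) : ℝ :=
  ∑' δ : Fin ℓ → ℕ+,
    (∏ i, ((δ i : ℕ) : ℝ) ^ (α i - 1)) *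
      Real.exp (-(∏ i, ((δ i : ℕ) : ℝ)) * t)

/-- The staircase series `Z_m^{[ℓ]}(t) = Z^{[ℓ]}_{m,m-1,…,m-ℓ+1}(t)`. -/
def Zstair (ℓ : ℕ) (m : ℤ) (t : ℝ) : ℝ :=
  Zr ℓ (fun i => (m : ℝ) - (i : ℕ)) t

/-- The inverse function `(Z_ℓ^{[ℓ]})^{-1} : (0,∞) → (0,∞)`. -/
def ZstairInv (ℓ : ℕ) (u : ℝ) : ℝ :=
  Function.invFunOn (Zstair ℓ ℓ) (Set.Ioi 0) u

/-- The function `q_{ℓ,n}(y,u,θ)` from the saddle point analysis. -/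
def qfun (ℓ n : ℕ) (y u θ : ℝ) : ℂ :=
  Complex.I * (n : ℂ) * (θ : ℂ) - (y : ℂ) * ∑' δ : Fin ℓ → ℕ+,
    (∏ i, ((δ i : ℕ) : ℂ) ^ ((ℓ : ℤ) - 2 - (i : ℕ))) *
      Complex.exp (-(((∏ i, ((δ i : ℕ) : ℝ)) * u : ℝ) : ℂ)) *
      (Complex.exp (Complex.I * (((∏ i, ((δ i : ℕ) : ℝ)) * θ : ℝ) : ℂ)) - 1)

/-- The normalizing sequence `b_n = ((x K_ℓ)^{1/(2ℓ)}/√(ℓ(ℓ-1))) n^{(ℓ-1)/(2ℓ)}`. -/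
def bseq (ℓ : ℕ) (x : ℝ) (n : ℕ) : ℝ :=
  (x * Kconst ℓ) ^ ((1 : ℝ) / (2 * (ℓ : ℝ))) / Real.sqrt ((ℓ : ℝ) * ((ℓ : ℝ) - 1)) *
    (n : ℝ) ^ (((ℓ : ℝ) - 1) / (2 * (ℓ : ℝ)))

/-- The sequence `x_n = x e^{s/b_n}`. -/
def xseq (ℓ : ℕ) (x s : ℝ) (n : ℕ) : ℝ := x * Real.exp (s / bseq ℓ x n)

/-- The saddle point sequence `t_n = (Z_ℓ^{[ℓ]})^{-1}(n/x)`. -/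
def tseq (ℓ : ℕ) (x : ℝ) (n : ℕ) : ℝ := ZstairInv ℓ ((n : ℝ) / x)

end

/-!
Commuting `ℓ`-tuples in `S_n` are actions of `ℤ^ℓ` on `n` points. Marking a point and removing its
orbit, which is `ℤ^ℓ` modulo a sublattice of finite index `m`, gives a recursion saying that
`∑ H_{ℓ,n}(y) qⁿ = exp (y ∑ L_ℓ(m) qᵐ / m)`, where `L_ℓ(m)` counts the sublattices of index `m`.
Since `L_ℓ(m) = ∑_{d ∣ m} d^(ℓ-1) L_{ℓ-1}(m/d)`, the weights `x L_ℓ(m) / m` grow on average like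
`m^(ℓ-2)`, which is all that the saddle-point method needs.

Write `Λ_j = ∑ x L_ℓ(m) m^(j-1) e^(-mt)`, and choose `t` with `Λ_1 = n`. Cauchy's formula on the
circle `|q| = e^(-t)`, with `y = x e^(z / √Λ_0)`, shows that the moment generating function of
`(K - Λ_0) / √Λ_0` tends to `e^(z² / (2ℓ))`, locally uniformly in `z ∈ ℂ`: the Gaussian peak at
`θ = 0` has width `Λ_2^(-1/2)`, and the tilt by `z` shifts it through
`Λ_1² / (Λ_0 Λ_2) → (ℓ-1)/ℓ`, which leaves the variance `1 - (ℓ-1)/ℓ = 1/ℓ`. Locally uniform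
convergence of holomorphic functions carries over to derivatives at `0`, so mean and variance
converge as well. Hence the characteristic functions of the standardized variables converge to
`e^(-τ²/2)`, and Lévy's theorem applies.
-/

section SubgroupCount

/-- The number of subgroups of `G` of index `m`; as usual, index `0` means infinite index. -/
noncomputable def subgroupCount (G : Type*) [Group G] (m : ℕ) : ℕ :=
  Nat.card {L : Subgroup G // L.index = m}

lemma finite_monoidHom_of_fg (G H : Type*) [Group G] [Group.FG G] [Group H] [Finite H] :
    Finite (G →* H) := by
  obtain ⟨S, hS, hfin⟩ := Group.fg_iff.1 ‹Group.FG G›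
  have := hfin.to_subtype
  refine Finite.of_injective (fun (φ : G →* H) (s : S) => φ s) fun φ ψ h => ?_
  exact MonoidHom.eq_of_eqOn_dense hS fun s hs => congrFun h ⟨s, hs⟩

/-- A subgroup of index `m` is a point stabilizer of an action on `m` points. -/
lemma finite_subgroup_of_index (G : Type*) [Group G] [Group.FG G] {m : ℕ} (hm : m ≠ 0) :
    Finite {L : Subgroup G // L.index = m} := by
  have := finite_monoidHom_of_fg G (Equiv.Perm (Fin m))
  let e (L : {L : Subgroup G // L.index = m}) : G ⧸ L.1 ≃ Fin m :=
    (Nat.equivFinOfCardPos (L.2.trans_ne hm)).trans (finCongr L.2)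
  let action (L : {L : Subgroup G // L.index = m}) : G →* Equiv.Perm (Fin m) :=
    (e L).permCongrHom.toMonoidHom.comp (MulAction.toPermHom G (G ⧸ L.1))
  have mem_iff (L : {L : Subgroup G // L.index = m}) (g : G) :
      g ∈ L.1 ↔ action L g (e L (1 : G)) = e L (1 : G) := by
    simp [action, QuotientGroup.eq]
  refine Finite.of_injective (fun L => (action L, e L (1 : G))) fun L L' h => ?_
  obtain ⟨haction, hpoint⟩ := Prod.mk.inj h
  ext g
  rw [mem_iff, mem_iff, haction, hpoint]

lemma subgroupCount_congr {G H : Type*} [Group G] [Group H] (e : G ≃* H) (m : ℕ) :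
    subgroupCount G m = subgroupCount H m :=
  Nat.card_congr <| e.mapSubgroup.toEquiv.subtypeEquiv fun L =>
    (Subgroup.index_map_equiv L e).symm ▸ Iff.rfl

end SubgroupCount

section ProdInt

open Multiplicative (ofAdd)

lemma index_eq_index_comap_inr_mul_index_map_fst {K G : Type*} [CommGroup K] [CommGroup G]
    (M : Subgroup (K × G)) :
    M.index = (M.comap (MonoidHom.inr K G)).index * (M.map (MonoidHom.fst K G)).index := by
  have hrange : (MonoidHom.inr K G).range = (MonoidHom.fst K G).ker := by
    ext ⟨a, b⟩
    rw [MonoidHom.mem_range, MonoidHom.mem_ker]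
    simp [Prod.ext_iff, eq_comm]
  rw [Subgroup.index_map, Subgroup.index_comap, hrange,
    MonoidHom.range_eq_top_of_surjective _ Prod.fst_surjective, Subgroup.index_top, mul_one,
    ← Subgroup.relIndex_sup_left, Subgroup.relIndex_mul_index le_sup_left]

lemma index_zpowers_ofAdd (d : ℕ) : (Subgroup.zpowers (ofAdd (d : ℤ))).index = d :=
  (Int.index_zmultiples d).trans (Int.natAbs_natCast d)

lemma eq_zpowers_ofAdd_index (M : Subgroup (Multiplicative ℤ)) :
    M = Subgroup.zpowers (ofAdd (M.index : ℤ)) := by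
  obtain ⟨k, hk⟩ := (Subgroup.isCyclic_iff_exists_zpowers_eq_top M).1 inferInstance
  have hM : M = Subgroup.zpowers (ofAdd (k.toAdd.natAbs : ℤ)) :=
    hk.symm.trans (congrArg AddSubgroup.toSubgroup (Int.zmultiples_natAbs k.toAdd)).symm
  rwa [(congrArg Subgroup.index hM).trans (index_zpowers_ofAdd _)]

variable {G : Type*} [CommGroup G]

/-- The subgroup of `ℤ × G` generated by `L ≤ G` and a lift of `(d, c) ∈ ℤ × G ⧸ L`. Every
finite-index subgroup of `ℤ × G` has this form for a unique triple `(d, L, c)` (Hermite normal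
form). -/
def hermiteSubgroup (d : ℕ) (L : Subgroup G) (c : G ⧸ L) : Subgroup (Multiplicative ℤ × G) :=
  (Subgroup.zpowers (ofAdd (d : ℤ), c)).comap
    ((MonoidHom.id (Multiplicative ℤ)).prodMap (QuotientGroup.mk' L))

lemma mem_hermiteSubgroup {d : ℕ} {L : Subgroup G} {c : G ⧸ L} {a : Multiplicative ℤ} {g : G} :
    (a, g) ∈ hermiteSubgroup d L c ↔ ∃ j : ℤ, ofAdd (d : ℤ) ^ j = a ∧ c ^ j = g := by
  simp [hermiteSubgroup, Subgroup.mem_zpowers_iff, Prod.ext_iff]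

lemma ofAdd_natCast_zpow_injective {d : ℕ} (hd : d ≠ 0) :
    Function.Injective fun j : ℤ => ofAdd (d : ℤ) ^ j := fun i j h => by
  have h' : i * d = j * d := congrArg Multiplicative.toAdd h
  exact mul_right_cancel₀ (Nat.cast_ne_zero.2 hd) h'

lemma comap_inr_hermiteSubgroup {d : ℕ} (hd : d ≠ 0) (L : Subgroup G) (c : G ⧸ L) :
    (hermiteSubgroup d L c).comap (MonoidHom.inr _ G) = L := by
  ext g
  rw [Subgroup.mem_comap, MonoidHom.inr_apply, mem_hermiteSubgroup]
  constructor
  · rintro ⟨j, hj, hc⟩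
    obtain rfl : j = 0 := ofAdd_natCast_zpow_injective hd (hj.trans (zpow_zero _).symm)
    exact (QuotientGroup.eq_one_iff g).1 (hc.symm.trans (zpow_zero c))
  · exact fun hg => ⟨0, zpow_zero _, (zpow_zero c).trans ((QuotientGroup.eq_one_iff g).2 hg).symm⟩

lemma map_fst_hermiteSubgroup (d : ℕ) (L : Subgroup G) (c : G ⧸ L) :
    (hermiteSubgroup d L c).map (MonoidHom.fst _ G) = Subgroup.zpowers (ofAdd (d : ℤ)) := by
  ext a
  simp only [Subgroup.mem_map, Prod.exists, mem_hermiteSubgroup, Subgroup.mem_zpowers_iff,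
    MonoidHom.coe_fst]
  constructor
  · rintro ⟨_, _, ⟨j, rfl, -⟩, rfl⟩
    exact ⟨j, rfl⟩
  · rintro ⟨j, rfl⟩
    obtain ⟨g, hg⟩ := QuotientGroup.mk_surjective (c ^ j)
    exact ⟨_, g, ⟨j, rfl, hg.symm⟩, rfl⟩

lemma index_hermiteSubgroup {d : ℕ} (hd : d ≠ 0) (L : Subgroup G) (c : G ⧸ L) :
    (hermiteSubgroup d L c).index = d * L.index := by
  rw [index_eq_index_comap_inr_mul_index_map_fst, comap_inr_hermiteSubgroup hd,
    map_fst_hermiteSubgroup, index_zpowers_ofAdd, mul_comm]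

lemma hermiteSubgroup_injective {d : ℕ} (hd : d ≠ 0) (L : Subgroup G) :
    Function.Injective (hermiteSubgroup d L) := by
  intro c c' h
  obtain ⟨g, rfl⟩ := QuotientGroup.mk_surjective c
  have hmem : (ofAdd (d : ℤ), g) ∈ hermiteSubgroup d L g :=
    mem_hermiteSubgroup.2 ⟨1, zpow_one _, zpow_one _⟩
  obtain ⟨j, hj, hc⟩ := mem_hermiteSubgroup.1 (h ▸ hmem)
  obtain rfl : j = 1 := ofAdd_natCast_zpow_injective hd (hj.trans (zpow_one _).symm)
  exact hc.symm.trans (zpow_one c')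

lemma hermiteSubgroup_comap_inr {M : Subgroup (Multiplicative ℤ × G)} {d : ℕ} {g : G}
    (hd : M.map (MonoidHom.fst _ G) = Subgroup.zpowers (ofAdd (d : ℤ)))
    (hg : (ofAdd (d : ℤ), g) ∈ M) :
    hermiteSubgroup d (M.comap (MonoidHom.inr _ G)) g = M := by
  have mem_iff (h : G) (j : ℤ) :
      ((g : G ⧸ M.comap (MonoidHom.inr _ G)) ^ j = h) ↔ (ofAdd (d : ℤ) ^ j, h) ∈ M := by
    rw [← QuotientGroup.mk_zpow, QuotientGroup.eq, Subgroup.mem_comap, MonoidHom.inr_apply,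
      ← M.mul_mem_cancel_left (M.zpow_mem hg j)]
    simp
  ext ⟨a, h⟩
  simp only [mem_hermiteSubgroup, mem_iff]
  constructor
  · rintro ⟨j, rfl, hj⟩
    exact hj
  · intro ha
    obtain ⟨j, rfl⟩ := Subgroup.mem_zpowers_iff.1 (hd ▸ Subgroup.mem_map_of_mem _ ha)
    exact ⟨j, rfl, ha⟩

/-- The finite-index subgroups of `ℤ × G` in Hermite normal form. -/
def hermiteMap (G : Type*) [CommGroup G] (m : ℕ) :
    (Σ p : Nat.divisorsAntidiagonal m, Σ L : {L : Subgroup G // L.index = p.1.2}, G ⧸ L.1) →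
      {M : Subgroup (Multiplicative ℤ × G) // M.index = m} :=
  fun ⟨p, L, c⟩ => ⟨hermiteSubgroup p.1.1 L.1 c, by
    rw [index_hermiteSubgroup (Nat.ne_zero_of_mem_divisorsAntidiagonal p.2).1, L.2,
      (Nat.mem_divisorsAntidiagonal.1 p.2).1]⟩

lemma hermiteMap_injective (m : ℕ) : Function.Injective (hermiteMap G m) := by
  rintro ⟨⟨⟨d, r⟩, hp⟩, ⟨L, hL⟩, c⟩ ⟨⟨⟨d', r'⟩, hp'⟩, ⟨L', hL'⟩, c'⟩ h
  replace h : hermiteSubgroup d L c = hermiteSubgroup d' L' c' := congrArg Subtype.val h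
  have hd : d ≠ 0 := (Nat.ne_zero_of_mem_divisorsAntidiagonal hp).1
  have hd' : d' ≠ 0 := (Nat.ne_zero_of_mem_divisorsAntidiagonal hp').1
  obtain rfl : L = L' := by
    rw [← comap_inr_hermiteSubgroup hd L c, h, comap_inr_hermiteSubgroup hd']
  obtain rfl : d = d' := by
    rw [← index_zpowers_ofAdd d, ← map_fst_hermiteSubgroup d L c, h, map_fst_hermiteSubgroup,
      index_zpowers_ofAdd]
  obtain rfl : r = r' := hL.symm.trans hL'
  rw [hermiteSubgroup_injective hd L h]

lemma hermiteMap_surjective {m : ℕ} (hm : m ≠ 0) : Function.Surjective (hermiteMap G m) := by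
  rintro ⟨M, hM⟩
  obtain ⟨d, hd⟩ : ∃ d, (M.map (MonoidHom.fst _ G)).index = d := ⟨_, rfl⟩
  have hmap : M.map (MonoidHom.fst _ G) = Subgroup.zpowers (ofAdd (d : ℤ)) :=
    hd ▸ eq_zpowers_ofAdd_index _
  obtain ⟨⟨_, g⟩, hg, rfl⟩ := hmap.ge (Subgroup.mem_zpowers _)
  have hindex : d * (M.comap (MonoidHom.inr _ G)).index = m := by
    rw [← hM, index_eq_index_comap_inr_mul_index_map_fst M, hd, mul_comm]
  exact ⟨⟨⟨(d, _), Nat.mem_divisorsAntidiagonal.2 ⟨hindex, hm⟩⟩, ⟨_, rfl⟩, g⟩,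
    Subtype.ext (hermiteSubgroup_comap_inr hmap hg)⟩

lemma subgroupCount_int_prod (G : Type*) [CommGroup G] [Group.FG G] {m : ℕ} (hm : m ≠ 0) :
    subgroupCount (Multiplicative ℤ × G) m =
      ∑ p ∈ Nat.divisorsAntidiagonal m, p.2 * subgroupCount G p.2 := by
  have hne (p : Nat.divisorsAntidiagonal m) : p.1.2 ≠ 0 :=
    (Nat.ne_zero_of_mem_divisorsAntidiagonal p.2).2
  have (p : Nat.divisorsAntidiagonal m) : Finite {L : Subgroup G // L.index = p.1.2} :=
    finite_subgroup_of_index G (hne p)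
  have (p : Nat.divisorsAntidiagonal m) (L : {L : Subgroup G // L.index = p.1.2}) :
      Finite (G ⧸ L.1) := Nat.finite_of_card_ne_zero (L.2.trans_ne (hne p))
  rw [subgroupCount, ← Nat.card_eq_of_bijective _
    ⟨hermiteMap_injective (G := G) m, hermiteMap_surjective hm⟩, Nat.card_sigma,
    ← Finset.sum_coe_sort (Nat.divisorsAntidiagonal m) fun p => p.2 * subgroupCount G p.2]
  refine Finset.sum_congr rfl fun p _ => ?_
  have := Fintype.ofFinite {L : Subgroup G // L.index = p.1.2}
  have hcard (L : {L : Subgroup G // L.index = p.1.2}) : Nat.card (G ⧸ L.1) = p.1.2 := L.2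
  simp only [Nat.card_sigma, hcard, Finset.sum_const, Finset.card_univ, smul_eq_mul,
    subgroupCount, Nat.card_eq_fintype_card, mul_comm]

end ProdInt

section Actions

variable {G X : Type*} [Group G]

/-- The number of orbits of the action of `G` on `X` given by `φ`. -/
noncomputable def numOrbits (φ : G →* Equiv.Perm X) : ℕ :=
  Nat.card (MulAction.orbitRel.Quotient φ.range X)

lemma orbitRel_range_iff (φ : G →* Equiv.Perm X) {x y : X} :
    MulAction.orbitRel φ.range X x y ↔ ∃ g, φ g y = x := by
  simp [MulAction.orbitRel_apply, MulAction.mem_orbit_iff, Subgroup.smul_def]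

/-- The embedding `e` identifies the transitive `G`-set `G ⧸ L` with an orbit of `φ`. -/
def IsOrbitMap (L : Subgroup G) (e : G ⧸ L ↪ X) (φ : G →* Equiv.Perm X) : Prop :=
  ∀ (g : G) (q : G ⧸ L), φ g (e q) = e (g • q)

namespace IsOrbitMap

variable {L L' : Subgroup G} {e : G ⧸ L ↪ X} {e' : G ⧸ L' ↪ X} {φ : G →* Equiv.Perm X}

lemma apply_mk (h : IsOrbitMap L e φ) (g : G) : φ g (e (1 : G)) = e g := by
  simp [h g]

lemma apply_notMem_range_iff (h : IsOrbitMap L e φ) (g : G) (x : X) :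
    φ g x ∉ Set.range e ↔ x ∉ Set.range e := by
  rw [not_iff_not]
  constructor
  · rintro ⟨q, hq⟩
    exact ⟨g⁻¹ • q, by rw [← h, hq, ← Equiv.Perm.mul_apply, ← map_mul]; simp⟩
  · rintro ⟨q, rfl⟩
    exact ⟨g • q, (h g q).symm⟩

lemma mem_iff (h : IsOrbitMap L e φ) (g : G) : g ∈ L ↔ φ g (e (1 : G)) = e (1 : G) := by
  rw [h.apply_mk, e.injective.eq_iff, eq_comm, QuotientGroup.eq, inv_one, one_mul]

lemma sigma_eq (h : IsOrbitMap L e φ) (h' : IsOrbitMap L' e' φ)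
    (hpoint : e (1 : G) = e' (1 : G)) :
    (⟨L, e⟩ : Σ L : Subgroup G, G ⧸ L ↪ X) = ⟨L', e'⟩ := by
  obtain rfl : L = L' := by
    ext g
    rw [h.mem_iff, h'.mem_iff, hpoint]
  congr 1
  ext q
  obtain ⟨g, rfl⟩ := QuotientGroup.mk_surjective q
  rw [← h.apply_mk, ← h'.apply_mk, hpoint]

/-- The action on the complement of the orbit. -/
def complAction (h : IsOrbitMap L e φ) : G →* Equiv.Perm {x : X // x ∉ Set.range e} where
  toFun g := (φ g).subtypePerm (h.apply_notMem_range_iff g)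
  map_one' := by ext; simp
  map_mul' a b := by ext x; exact Equiv.congr_fun (map_mul φ a b) x.1

/-- The orbits of `φ` are the distinguished orbit (`none`) and those of its complement. -/
def ofOptionOrbit (h : IsOrbitMap L e φ) :
    Option (MulAction.orbitRel.Quotient h.complAction.range {x : X // x ∉ Set.range e}) →
      MulAction.orbitRel.Quotient φ.range X :=
  fun o => o.elim (Quotient.mk _ (e (1 : G))) <| Quotient.map Subtype.val fun a b hab => by
    obtain ⟨g, hg⟩ := (orbitRel_range_iff _).1 hab
    exact (orbitRel_range_iff φ).2 ⟨g, congrArg Subtype.val hg⟩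

lemma ofOptionOrbit_injective (h : IsOrbitMap L e φ) : Function.Injective h.ofOptionOrbit := by
  have none_ne_some (y : {x : X // x ∉ Set.range e}) :
      h.ofOptionOrbit none ≠ h.ofOptionOrbit (some (Quotient.mk _ y)) := fun heq => by
    obtain ⟨g, hg⟩ := (orbitRel_range_iff φ).1 (Quotient.exact heq.symm)
    exact y.2 ⟨_, (h.apply_mk g).symm.trans hg⟩
  rintro (_ | ⟨⟨a⟩⟩) (_ | ⟨⟨b⟩⟩) hab
  · rfl
  · exact absurd hab (none_ne_some b)
  · exact absurd hab.symm (none_ne_some a)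
  · obtain ⟨g, hg⟩ := (orbitRel_range_iff φ).1 (Quotient.exact hab)
    exact congrArg some (Quotient.sound ((orbitRel_range_iff _).2 ⟨g, Subtype.ext hg⟩))

lemma ofOptionOrbit_surjective (h : IsOrbitMap L e φ) :
    Function.Surjective h.ofOptionOrbit := by
  rintro ⟨x⟩
  by_cases hx : x ∈ Set.range e
  · obtain ⟨q, rfl⟩ := hx
    obtain ⟨g, rfl⟩ := QuotientGroup.mk_surjective q
    refine ⟨none, Quotient.sound ((orbitRel_range_iff φ).2 ⟨g⁻¹, ?_⟩)⟩
    rw [map_inv, Equiv.Perm.inv_eq_iff_eq, h.apply_mk]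
  · exact ⟨some (Quotient.mk _ ⟨x, hx⟩), rfl⟩

lemma numOrbits_eq_add_one [Finite X] (h : IsOrbitMap L e φ) :
    numOrbits φ = numOrbits h.complAction + 1 := by
  rw [numOrbits, numOrbits, ← Finite.card_option]
  exact (Nat.card_eq_of_bijective _ ⟨h.ofOptionOrbit_injective, h.ofOptionOrbit_surjective⟩).symm

end IsOrbitMap

open Classical in
/-- The action on `X` that is the translation action on the image of `G ⧸ L` and `ψ` on its
complement. -/
noncomputable def glueAction (L : Subgroup G) (e : G ⧸ L ↪ X)
    (ψ : G →* Equiv.Perm {x : X // x ∉ Set.range e}) : G →* Equiv.Perm X :=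
  (Equiv.Perm.subtypeCongrHom fun x => x ∈ Set.range e).comp
    (MonoidHom.prod ((Equiv.ofInjective e e.injective).permCongrHom.toMonoidHom.comp
      (MulAction.toPermHom G (G ⧸ L))) ψ)

open Classical in
lemma glueAction_apply_coe (L : Subgroup G) (e : G ⧸ L ↪ X)
    (ψ : G →* Equiv.Perm {x : X // x ∉ Set.range e}) (g : G) (x : {x : X // x ∉ Set.range e}) :
    glueAction L e ψ g x = ψ g x :=
  Equiv.Perm.subtypeCongr.right_apply _ _ x.2

open Classical in
lemma isOrbitMap_glueAction (L : Subgroup G) (e : G ⧸ L ↪ X)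
    (ψ : G →* Equiv.Perm {x : X // x ∉ Set.range e}) : IsOrbitMap L e (glueAction L e ψ) := by
  intro g q
  refine (Equiv.Perm.subtypeCongr.left_apply _ _ (Set.mem_range_self q)).trans ?_
  change (e (g • (Equiv.ofInjective e e.injective).symm
    (Equiv.ofInjective e e.injective q)) : X) = _
  rw [Equiv.symm_apply_apply]

/-- Actions with a prescribed orbit correspond to actions on its complement. -/
noncomputable def orbitMapEquiv (L : Subgroup G) (e : G ⧸ L ↪ X) :
    {φ : G →* Equiv.Perm X // IsOrbitMap L e φ} ≃
      (G →* Equiv.Perm {x : X // x ∉ Set.range e}) where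
  toFun φ := φ.2.complAction
  invFun ψ := ⟨glueAction L e ψ, isOrbitMap_glueAction L e ψ⟩
  left_inv := by
    rintro ⟨φ, h⟩
    ext g x
    by_cases hx : x ∈ Set.range e
    · obtain ⟨q, rfl⟩ := hx
      exact (isOrbitMap_glueAction L e _ g q).trans (h g q).symm
    · exact glueAction_apply_coe L e _ g ⟨x, hx⟩
  right_inv ψ := by
    ext g x
    exact glueAction_apply_coe L e ψ g x

lemma exists_isOrbitMap (φ : G →* Equiv.Perm X) (p : X) :
    ∃ (L : Subgroup G) (e : G ⧸ L ↪ X), IsOrbitMap L e φ ∧ e (1 : G) = p := by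
  let _ : MulAction G X := MulAction.compHom X φ
  refine ⟨MulAction.stabilizer G p,
    ⟨_, MulAction.injective_ofQuotientStabilizer G p⟩, fun g q => ?_, ?_⟩
  · exact (MulAction.ofQuotientStabilizer_smul G p g q).symm
  · exact (MulAction.ofQuotientStabilizer_mk G p 1).trans (one_smul G p)

end Actions

section ActionCount

variable {G X : Type*} [Group G]

/-- The number of actions of `G` on `X` with exactly `k` orbits. -/
noncomputable def actionCount (G : Type*) [Group G] (X : Type*) (k : ℕ) : ℕ :=
  Nat.card {φ : G →* Equiv.Perm X // numOrbits φ = k}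

lemma actionCount_congr {Y : Type*} (e : X ≃ Y) (k : ℕ) :
    actionCount G X k = actionCount G Y k := by
  refine Nat.card_congr
    ((MulEquiv.monoidHomCongrRightEquiv e.permCongrHom).subtypeEquiv fun φ => ?_)
  suffices numOrbits φ = numOrbits (MulEquiv.monoidHomCongrRightEquiv e.permCongrHom φ) by
    rw [this]
  refine Nat.card_congr (Quotient.congr e fun a b => ?_)
  change MulAction.orbitRel _ _ a b ↔ MulAction.orbitRel _ _ (e a) (e b)
  rw [orbitRel_range_iff, orbitRel_range_iff]
  change _ ↔ ∃ g, e (φ g (e.symm (e b))) = e a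
  simp

lemma card_compl_range_embedding [Finite X] {Y : Type*} (e : Y ↪ X) :
    Nat.card {x : X // x ∉ Set.range e} = Nat.card X - Nat.card Y := by
  have := Fintype.ofFinite X
  classical
  rw [Nat.card_eq_fintype_card, Fintype.card_subtype_compl, ← Nat.card_eq_fintype_card,
    ← Nat.card_eq_fintype_card, Nat.card_congr (Equiv.ofInjective e e.injective)]

lemma card_isOrbitMap_numOrbits_eq [Finite X] (L : Subgroup G) (e : G ⧸ L ↪ X) (k : ℕ) :
    Nat.card {φ : G →* Equiv.Perm X // IsOrbitMap L e φ ∧ numOrbits φ = k + 1} =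
      actionCount G (Fin (Nat.card X - L.index)) k := by
  have label : {x : X // x ∉ Set.range e} ≃ Fin (Nat.card X - L.index) :=
    (Finite.equivFin _).trans (finCongr (card_compl_range_embedding e))
  rw [← actionCount_congr label]
  refine Nat.card_congr ((Equiv.subtypeSubtypeEquivSubtypeInter _ _).symm.trans
    ((orbitMapEquiv L e).subtypeEquiv ?_))
  rintro ⟨φ, h⟩
  change numOrbits φ = k + 1 ↔ numOrbits h.complAction = k
  rw [h.numOrbits_eq_add_one, Nat.add_right_cancel_iff]

/-- Marking a point of `X` amounts to marking its orbit together with an identification of that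
orbit with some `G ⧸ L` sending the coset of `1` to the marked point. -/
lemma bijective_toPointedAction [Finite X] (k : ℕ) : Function.Bijective
    (fun q : (Σ i : Fin (Nat.card X), Σ L : {L : Subgroup G // L.index = i + 1},
        Σ e : (G ⧸ L.1 ↪ X),
          {φ : G →* Equiv.Perm X // IsOrbitMap L.1 e φ ∧ numOrbits φ = k + 1}) =>
      ((⟨q.2.2.2.1, q.2.2.2.2.2⟩, q.2.2.1 (1 : G)) :
        {φ : G →* Equiv.Perm X // numOrbits φ = k + 1} × X)) := by
  constructor
  · rintro ⟨i, ⟨L, hL⟩, e, φ, h, hk⟩ ⟨i', ⟨L', hL'⟩, e', φ', h', hk'⟩ heq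
    obtain ⟨hφ, hpoint⟩ := Prod.mk.inj heq
    obtain rfl : φ = φ' := congrArg Subtype.val hφ
    cases h.sigma_eq h' hpoint
    obtain rfl : i = i' := Fin.ext (Nat.succ_injective (hL.symm.trans hL'))
    rfl
  · rintro ⟨⟨φ, hk⟩, p⟩
    obtain ⟨L, e, h, rfl⟩ := exists_isOrbitMap φ p
    have : Finite (G ⧸ L) := Finite.of_injective e e.injective
    have hpos : 0 < L.index := Nat.card_pos
    have hle : L.index ≤ Nat.card X := Nat.card_le_card_of_injective e e.injective
    exact ⟨⟨⟨L.index - 1, by omega⟩, ⟨L, (Nat.sub_add_cancel hpos).symm⟩, e, φ, h, hk⟩, rfl⟩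

lemma card_embedding_eq_descFactorial {Y : Type*} [Finite X] [Finite Y] :
    Nat.card (Y ↪ X) = (Nat.card X).descFactorial (Nat.card Y) := by
  have := Fintype.ofFinite X
  have := Fintype.ofFinite Y
  classical
  simp only [Nat.card_eq_fintype_card, Fintype.card_embedding_eq]

lemma card_mul_actionCount_succ [Group.FG G] [Finite X] (k : ℕ) :
    Nat.card X * actionCount G X (k + 1) = ∑ i ∈ Finset.range (Nat.card X),
      subgroupCount G (i + 1) * ((Nat.card X).descFactorial (i + 1) *
        actionCount G (Fin (Nat.card X - (i + 1))) k) := by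
  have := finite_monoidHom_of_fg G (Equiv.Perm X)
  have hfin (i : ℕ) : Finite {L : Subgroup G // L.index = i + 1} :=
    finite_subgroup_of_index G i.succ_ne_zero
  have hfin' (i : ℕ) (L : {L : Subgroup G // L.index = i + 1}) : Finite (G ⧸ L.1) :=
    Nat.finite_of_card_ne_zero (L.2.trans_ne i.succ_ne_zero)
  have hfiber (i : ℕ) (L : {L : Subgroup G // L.index = i + 1}) :
      Nat.card (Σ e : (G ⧸ L.1 ↪ X),
        {φ : G →* Equiv.Perm X // IsOrbitMap L.1 e φ ∧ numOrbits φ = k + 1}) =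
      (Nat.card X).descFactorial (i + 1) * actionCount G (Fin (Nat.card X - (i + 1))) k := by
    have := Fintype.ofFinite (G ⧸ L.1 ↪ X)
    have hcard : Nat.card (G ⧸ L.1) = i + 1 := L.2
    simp only [Nat.card_sigma, card_isOrbitMap_numOrbits_eq, L.2, Finset.sum_const,
      Finset.card_univ, smul_eq_mul, ← Nat.card_eq_fintype_card, card_embedding_eq_descFactorial,
      hcard]
  rw [mul_comm, actionCount, ← Nat.card_prod,
    ← Nat.card_eq_of_bijective _ (bijective_toPointedAction k), Nat.card_sigma,
    ← Fin.sum_univ_eq_sum_range (fun i => subgroupCount G (i + 1) *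
      ((Nat.card X).descFactorial (i + 1) * actionCount G (Fin (Nat.card X - (i + 1))) k))]
  refine Finset.sum_congr rfl fun i _ => ?_
  have := Fintype.ofFinite {L : Subgroup G // L.index = i + 1}
  simp only [Nat.card_sigma, hfiber, Finset.sum_const, Finset.card_univ, smul_eq_mul,
    subgroupCount, Nat.card_eq_fintype_card]

end ActionCount

section CommutingTuples

open Multiplicative (ofAdd)

variable {ℓ : ℕ}

/-- The free abelian group `ℤ^ℓ`, written multiplicatively because it acts on finite sets. -/
abbrev FreeAbelian (ℓ : ℕ) : Type := Fin ℓ → Multiplicative ℤ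

lemma mulSingle_eq_zpow (i : Fin ℓ) (a : Multiplicative ℤ) :
    (Pi.mulSingle i a : FreeAbelian ℓ) = Pi.mulSingle i (ofAdd 1) ^ a.toAdd := by
  rw [← Pi.mulSingle_zpow, ← ofAdd_zsmul, smul_eq_mul, mul_one, ofAdd_toAdd]

lemma closure_range_mulSingle_ofAdd_one :
    Subgroup.closure (Set.range fun i : Fin ℓ => (Pi.mulSingle i (ofAdd 1) : FreeAbelian ℓ)) =
      ⊤ := by
  refine eq_top_iff.2 fun v _ => ?_
  rw [← Finset.univ_prod_mulSingle v]
  refine Subgroup.prod_mem _ fun i _ => ?_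
  rw [mulSingle_eq_zpow]
  exact Subgroup.zpow_mem _ (Subgroup.subset_closure (Set.mem_range_self i)) _

variable {H : Type*} [Group H]

/-- The images of the standard basis of `ℤ^ℓ` under a homomorphism. -/
def basisImage (φ : FreeAbelian ℓ →* H) (i : Fin ℓ) : H := φ (Pi.mulSingle i (ofAdd 1))

lemma closure_range_basisImage (φ : FreeAbelian ℓ →* H) :
    Subgroup.closure (Set.range (basisImage φ)) = φ.range := by
  rw [MonoidHom.range_eq_map, ← closure_range_mulSingle_ofAdd_one, MonoidHom.map_closure,
    ← Set.range_comp]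
  rfl

lemma basisImage_injective : Function.Injective (basisImage (ℓ := ℓ) (H := H)) := fun _ _ h =>
  MonoidHom.eq_of_eqOn_dense closure_range_mulSingle_ofAdd_one <| by
    rintro _ ⟨i, rfl⟩
    exact congrFun h i

lemma basisImage_commute (φ : FreeAbelian ℓ →* H) (i j : Fin ℓ) :
    basisImage φ i * basisImage φ j = basisImage φ j * basisImage φ i := by
  rw [basisImage, basisImage, ← map_mul, mul_comm, map_mul]

lemma exists_basisImage_eq {σ : Fin ℓ → H} (hσ : ∀ i j, σ i * σ j = σ j * σ i) :
    ∃ φ : FreeAbelian ℓ →* H, basisImage φ = σ := by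
  have hcomm : Pairwise fun i j => ∀ a b : Multiplicative ℤ,
      Commute (zpowersHom H (σ i) a) (zpowersHom H (σ j) b) := fun i j _ a b =>
    Commute.zpow_zpow (hσ i j) _ _
  refine ⟨MonoidHom.noncommPiCoprod (fun i => zpowersHom H (σ i)) hcomm, funext fun i => ?_⟩
  exact (MonoidHom.noncommPiCoprod_mulSingle _ _ _).trans (zpow_one (σ i))

lemma kappa_basisImage {n : ℕ} (φ : FreeAbelian ℓ →* Equiv.Perm (Fin n)) :
    kappa (basisImage φ) = numOrbits φ := by
  rw [kappa, numOrbits, closure_range_basisImage]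

lemma Acount_eq_actionCount (ℓ n k : ℕ) :
    Acount ℓ n k = actionCount (FreeAbelian ℓ) (Fin n) k := by
  refine (Nat.card_eq_of_bijective (fun φ => ⟨basisImage φ.1, basisImage_commute φ.1,
    (kappa_basisImage φ.1).trans φ.2⟩) ⟨fun φ ψ h => ?_, ?_⟩).symm
  · exact Subtype.ext (basisImage_injective (congrArg Subtype.val h))
  · rintro ⟨σ, hσ, hk⟩
    obtain ⟨φ, rfl⟩ := exists_basisImage_eq hσ
    exact ⟨⟨φ, (kappa_basisImage φ).symm.trans hk⟩, rfl⟩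

/-- The number of sublattices of `ℤ^ℓ` of index `m`. -/
noncomputable def latticeCount (ℓ m : ℕ) : ℕ := subgroupCount (FreeAbelian ℓ) m

lemma mul_Acount_succ (ℓ n k : ℕ) :
    n * Acount ℓ n (k + 1) = ∑ i ∈ Finset.range n,
      latticeCount ℓ (i + 1) * (n.descFactorial (i + 1) * Acount ℓ (n - (i + 1)) k) := by
  simpa only [Acount_eq_actionCount, latticeCount, Nat.card_eq_fintype_card, Fintype.card_fin]
    using card_mul_actionCount_succ (G := FreeAbelian ℓ) (X := Fin n) k

lemma kappa_le {n : ℕ} (σ : Fin ℓ → Equiv.Perm (Fin n)) : kappa σ ≤ n :=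
  (Nat.card_le_card_of_surjective _ Quotient.mk_surjective).trans_eq (Nat.card_fin n)

lemma Acount_eq_zero_of_lt {n k : ℕ} (h : n < k) : Acount ℓ n k = 0 := by
  refine Nat.card_eq_zero.2 (Or.inl ⟨fun σ => ?_⟩)
  exact absurd (σ.2.2 ▸ kappa_le σ.1) h.not_ge

lemma Acount_zero_right (ℓ : ℕ) {n : ℕ} (hn : n ≠ 0) : Acount ℓ n 0 = 0 := by
  refine Nat.card_eq_zero.2 (Or.inl ⟨fun σ => ?_⟩)
  have : NeZero n := ⟨hn⟩
  have : Nonempty (MulAction.orbitRel.Quotient (Subgroup.closure (Set.range σ.1)) (Fin n)) :=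
    ⟨Quotient.mk _ 0⟩
  exact (Nat.card_pos.ne' : kappa σ.1 ≠ 0) σ.2.2

lemma Acount_zero_zero (ℓ : ℕ) : Acount ℓ 0 0 = 1 :=
  Nat.card_eq_one_iff_unique.2 ⟨⟨fun _ _ => Subtype.ext (Subsingleton.elim _ _)⟩,
    ⟨⟨fun _ => 1, fun _ _ => rfl, Nat.le_zero.1 (kappa_le _)⟩⟩⟩

end CommutingTuples

section LatticeCount

open ArithmeticFunction (pmul zeta)

lemma latticeCount_zero_left (m : ℕ) : latticeCount 0 m = if m = 1 then 1 else 0 := by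
  have index_eq_one (L : Subgroup (FreeAbelian 0)) : L.index = 1 :=
    Subgroup.index_eq_one.2 (Subsingleton.elim _ _)
  split_ifs with hm
  · exact Nat.card_eq_one_iff_unique.2
      ⟨⟨fun _ _ => Subtype.ext (Subsingleton.elim _ _)⟩, ⟨⟨⊤, hm ▸ index_eq_one ⊤⟩⟩⟩
  · exact Nat.card_eq_zero.2 (Or.inl ⟨fun L => hm (L.2.symm.trans (index_eq_one L.1))⟩)

/-- The splitting `ℤ^(ℓ+1) ≃ ℤ × ℤ^ℓ` off the first coordinate. -/
def freeAbelianSuccEquiv (ℓ : ℕ) : Multiplicative ℤ × FreeAbelian ℓ ≃* FreeAbelian (ℓ + 1) where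
  toEquiv := Fin.consEquiv fun _ => Multiplicative ℤ
  map_mul' _ _ := funext (Fin.cases rfl fun _ => rfl)

lemma latticeCount_succ (ℓ : ℕ) {m : ℕ} (hm : m ≠ 0) :
    latticeCount (ℓ + 1) m = ∑ p ∈ m.divisorsAntidiagonal, p.2 * latticeCount ℓ p.2 := by
  rw [latticeCount, ← subgroupCount_congr (freeAbelianSuccEquiv ℓ),
    subgroupCount_int_prod (FreeAbelian ℓ) hm]
  rfl

/-- `latticeCount ℓ` as an arithmetic function: subgroups of infinite index, which
`latticeCount ℓ 0` counts, are discarded. -/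
noncomputable def latticeFn (ℓ : ℕ) : ArithmeticFunction ℕ :=
  ⟨fun m => if m = 0 then 0 else latticeCount ℓ m, if_pos rfl⟩

lemma latticeFn_apply (ℓ : ℕ) {m : ℕ} (hm : m ≠ 0) : latticeFn ℓ m = latticeCount ℓ m :=
  if_neg hm

lemma latticeFn_zero : latticeFn 0 = 1 := by
  ext m
  rcases eq_or_ne m 0 with rfl | hm
  · simp
  · rw [latticeFn_apply 0 hm, latticeCount_zero_left, ArithmeticFunction.one_apply]

lemma latticeFn_succ (ℓ : ℕ) :
    latticeFn (ℓ + 1) = zeta * pmul ArithmeticFunction.id (latticeFn ℓ) := by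
  ext m
  rcases eq_or_ne m 0 with rfl | hm
  · simp
  rw [latticeFn_apply _ hm, latticeCount_succ ℓ hm, ArithmeticFunction.mul_apply]
  refine Finset.sum_congr rfl fun p hp => ?_
  obtain ⟨left_ne_zero, right_ne_zero⟩ := Nat.ne_zero_of_mem_divisorsAntidiagonal hp
  rw [ArithmeticFunction.zeta_apply_ne left_ne_zero, one_mul, ArithmeticFunction.pmul_apply,
    ArithmeticFunction.id_apply, latticeFn_apply ℓ right_ne_zero]

lemma pmul_id_one : pmul ArithmeticFunction.id (1 : ArithmeticFunction ℕ) = 1 := by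
  ext m
  by_cases hm : m = 1 <;> simp [hm]

lemma pmul_id_mul (f g : ArithmeticFunction ℕ) :
    pmul ArithmeticFunction.id (f * g) =
      pmul ArithmeticFunction.id f * pmul ArithmeticFunction.id g := by
  ext m
  simp only [ArithmeticFunction.pmul_apply, ArithmeticFunction.mul_apply,
    ArithmeticFunction.id_apply, Finset.mul_sum]
  refine Finset.sum_congr rfl fun p hp => ?_
  rw [← (Nat.mem_divisorsAntidiagonal.1 hp).1, mul_mul_mul_comm]

lemma pmul_id_pow (i : ℕ) :
    pmul ArithmeticFunction.id (ArithmeticFunction.pow i) = ArithmeticFunction.pow (i + 1) := by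
  ext m
  rcases eq_or_ne m 0 with rfl | hm
  · simp
  · simp [ArithmeticFunction.pow_apply, hm, pow_succ']

-- Both sides have the Dirichlet series `ζ(s) ζ(s-1) ⋯ ζ(s-ℓ)`.
lemma latticeFn_succ' (ℓ : ℕ) :
    latticeFn (ℓ + 1) = ArithmeticFunction.pow ℓ * latticeFn ℓ := by
  induction ℓ with
  | zero => rw [latticeFn_succ, latticeFn_zero, pmul_id_one, ArithmeticFunction.pow_zero_eq_zeta]
  | succ ℓ ih =>
    rw [latticeFn_succ (ℓ + 1), ih, pmul_id_mul, pmul_id_pow, mul_left_comm, ← latticeFn_succ, ih]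

lemma latticeCount_succ' (ℓ : ℕ) {m : ℕ} (hm : m ≠ 0) :
    latticeCount (ℓ + 1) m = ∑ p ∈ m.divisorsAntidiagonal, p.1 ^ ℓ * latticeCount ℓ p.2 := by
  rw [← latticeFn_apply _ hm, latticeFn_succ', ArithmeticFunction.mul_apply]
  refine Finset.sum_congr rfl fun p hp => ?_
  obtain ⟨left_ne_zero, right_ne_zero⟩ := Nat.ne_zero_of_mem_divisorsAntidiagonal hp
  rw [latticeFn_apply ℓ right_ne_zero, ArithmeticFunction.pow_apply,
    if_neg fun h => left_ne_zero h.2]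

lemma latticeCount_one_right (ℓ : ℕ) : latticeCount ℓ 1 = 1 := by
  induction ℓ with
  | zero => rw [latticeCount_zero_left, if_pos rfl]
  | succ ℓ ih => simp [latticeCount_succ' ℓ one_ne_zero, ih]

lemma pow_le_latticeCount_succ (ℓ : ℕ) {m : ℕ} (hm : m ≠ 0) :
    m ^ ℓ ≤ latticeCount (ℓ + 1) m := by
  have mem : (m, 1) ∈ m.divisorsAntidiagonal := by simp [hm]
  simpa only [latticeCount_one_right, mul_one, ← latticeCount_succ' ℓ hm] using
    Finset.single_le_sum (f := fun p : ℕ × ℕ => p.1 ^ ℓ * latticeCount ℓ p.2)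
      (fun _ _ => Nat.zero_le _) mem

lemma hasSum_sum_divisorsAntidiagonal {F : ℕ → ℕ → ℝ} {a : ℝ}
    (hF : HasSum (fun p : ℕ+ × ℕ+ => F p.1 p.2) a) :
    HasSum (fun n : ℕ+ => ∑ p ∈ (n : ℕ).divisorsAntidiagonal, F p.1 p.2) a := by
  refine (sigmaAntidiagonalEquivProd.hasSum_iff.2 hF).sigma fun n => ?_
  rw [← Finset.sum_coe_sort (n : ℕ).divisorsAntidiagonal fun p => F p.1 p.2]
  exact hasSum_fintype _

lemma summable_latticeCount_div_pow {ℓ s : ℕ} (hs : ℓ < s) :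
    Summable fun m : ℕ+ => (latticeCount ℓ m : ℝ) / (m : ℝ) ^ s := by
  induction ℓ with
  | zero =>
    refine (hasSum_ite_eq (1 : ℕ+) (1 : ℝ)).summable.congr fun m => ?_
    rcases eq_or_ne m 1 with rfl | hm
    · simp [latticeCount_zero_left]
    · simp [latticeCount_zero_left, hm]
  | succ ℓ ih =>
    have summable_pow : Summable fun d : ℕ+ => (d : ℝ) ^ ℓ / (d : ℝ) ^ s := by
      refine ((Real.summable_one_div_nat_pow.2 (by omega : 1 < s - ℓ)).comp_injective
        PNat.coe_injective).congr fun d => ?_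
      rw [Function.comp_apply, div_eq_div_iff (by positivity) (by positivity), one_mul, ← pow_add,
        Nat.add_sub_cancel' (by omega)]
    have summable_prod := summable_pow.mul_of_nonneg (ih (by omega))
      (fun _ => by positivity) fun _ => by positivity
    have summable_divisors := (hasSum_sum_divisorsAntidiagonal (F := fun d r =>
      (d : ℝ) ^ ℓ / (d : ℝ) ^ s * (latticeCount ℓ r / (r : ℝ) ^ s)) summable_prod.hasSum).summable
    refine summable_divisors.congr fun n => ?_
    rw [latticeCount_succ' ℓ n.ne_zero, Nat.cast_sum, Finset.sum_div]
    refine Finset.sum_congr rfl fun p hp => ?_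
    rw [← (Nat.mem_divisorsAntidiagonal.1 hp).1]
    push_cast
    rw [mul_pow, div_mul_div_comm]

end LatticeCount

section PowerExponentialSums

variable {p : ℕ} {τ : ℝ}

lemma summable_pnat_pow_mul_exp_neg (p : ℕ) (hτ : 0 < τ) :
    Summable fun d : ℕ+ => (d : ℝ) ^ p * exp (-(d * τ)) := by
  refine ((summable_pow_mul_exp_neg_nat_mul p hτ).comp_injective PNat.coe_injective).congr
    fun d => ?_
  rw [Function.comp_apply, neg_mul, mul_comm τ]

lemma hasSum_choose_mul_exp_neg (p : ℕ) (hτ : 0 < τ) :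
    HasSum (fun n : ℕ => ((n + p).choose p : ℝ) * exp (-τ) ^ n) (1 / (1 - exp (-τ)) ^ (p + 1)) :=
  hasSum_choose_mul_geometric_of_norm_lt_one p <| by
    rwa [norm_of_nonneg (exp_pos _).le, exp_lt_one_iff, neg_lt_zero]

lemma tsum_pnat_pow_mul_exp_neg_le (p : ℕ) (hτ : 0 < τ) :
    ∑' d : ℕ+, (d : ℝ) ^ p * exp (-(d * τ)) ≤
      p.factorial * exp (-τ) * (1 / (1 - exp (-τ)) ^ (p + 1)) := by
  refine hasSum_le_inj PNat.natPred PNat.natPred_injective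
    (fun n _ => by positivity) (fun d => ?_) (summable_pnat_pow_mul_exp_neg p hτ).hasSum
    ((hasSum_choose_mul_exp_neg p hτ).mul_left _)
  have pow_le : (d : ℝ) ^ p ≤ p.factorial * ((d.natPred + p).choose p : ℝ) := by
    have := Nat.pow_succ_le_ascFactorial (d.natPred + 1) p
    rw [Nat.ascFactorial_eq_factorial_mul_choose, d.natPred_add_one] at this
    exact_mod_cast this
  have exp_eq : exp (-(d * τ)) = exp (-τ) * exp (-τ) ^ d.natPred := by
    rw [← pow_succ', d.natPred_add_one, ← exp_nat_mul, mul_neg]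
  rw [exp_eq]
  calc _ ≤ (p.factorial * ((d.natPred + p).choose p : ℝ)) *
        (exp (-τ) * exp (-τ) ^ d.natPred) := by gcongr
    _ = _ := by ring

lemma le_tsum_pnat_pow_mul_exp_neg (p : ℕ) (hτ : 0 < τ) :
    p.factorial * exp (-τ) ^ (p + 1) * (1 / (1 - exp (-τ)) ^ (p + 1)) ≤
      ∑' d : ℕ+, (d : ℝ) ^ p * exp (-(d * τ)) := by
  refine hasSum_le_inj (fun n : ℕ => (n + p).succPNat)
    (fun a b h => by simpa using h) (fun _ _ => by positivity) (fun n => ?_)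
    ((hasSum_choose_mul_exp_neg p hτ).mul_left _) (summable_pnat_pow_mul_exp_neg p hτ).hasSum
  have le_pow : (p.factorial : ℝ) * ((n + p).choose p : ℝ) ≤ ((n + p + 1 : ℕ) : ℝ) ^ p := by
    rw [← Nat.cast_mul, ← Nat.descFactorial_eq_factorial_mul_choose]
    exact_mod_cast (Nat.descFactorial_le_pow (n + p) p).trans
      (Nat.pow_le_pow_left (Nat.le_succ _) p)
  rw [Nat.succPNat_coe, Nat.succ_eq_add_one, ← mul_neg, exp_nat_mul]
  calc _ = (p.factorial * ((n + p).choose p : ℝ)) * exp (-τ) ^ (n + p + 1) := by ring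
    _ ≤ _ := by gcongr

lemma div_one_sub_exp_neg_le (hτ : 0 < τ) : τ / (1 - exp (-τ)) ≤ 1 + τ := by
  have exp_lt_one : exp (-τ) < 1 := by rwa [exp_lt_one_iff, neg_lt_zero]
  have exp_mul : exp τ * exp (-τ) = 1 := by rw [← exp_add, add_neg_cancel, exp_zero]
  rw [div_le_iff₀ (sub_pos.2 exp_lt_one)]
  nlinarith [add_one_le_exp τ, exp_pos (-τ)]

/-- A bound, uniform in `τ > 0`, for `τ^(p+1) ∑ d^p e^(-dτ)`. -/
noncomputable def powExpBound (p : ℕ) : ℝ := p.factorial * ((p + 1).factorial * exp 1)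

lemma pow_mul_tsum_pow_mul_exp_neg_le (p : ℕ) (hτ : 0 < τ) :
    τ ^ (p + 1) * ∑' d : ℕ+, (d : ℝ) ^ p * exp (-(d * τ)) ≤ powExpBound p := by
  have exp_lt_one : exp (-τ) < 1 := by rwa [exp_lt_one_iff, neg_lt_zero]
  have pow_le : (1 + τ) ^ (p + 1) ≤ (p + 1).factorial * exp (1 + τ) := by
    rw [mul_comm, ← div_le_iff₀ (by positivity)]
    exact pow_div_factorial_le_exp _ (by positivity) _
  calc _ ≤ τ ^ (p + 1) * (p.factorial * exp (-τ) * (1 / (1 - exp (-τ)) ^ (p + 1))) := by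
        gcongr; exact tsum_pnat_pow_mul_exp_neg_le p hτ
    _ = p.factorial * ((τ / (1 - exp (-τ))) ^ (p + 1) * exp (-τ)) := by rw [div_pow]; ring
    _ ≤ p.factorial * ((1 + τ) ^ (p + 1) * exp (-τ)) := by
        have := div_nonneg hτ.le (sub_pos.2 exp_lt_one).le
        gcongr
        exact div_one_sub_exp_neg_le hτ
    _ ≤ p.factorial * ((p + 1).factorial * exp (1 + τ) * exp (-τ)) := by gcongr
    _ = _ := by rw [mul_assoc _ (exp _), ← exp_add, add_neg_cancel_right, powExpBound]

lemma tendsto_div_one_sub_exp_neg :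
    Tendsto (fun τ : ℝ => τ / (1 - exp (-τ))) (𝓝[>] 0) (𝓝 1) := by
  have hasDerivAt : HasDerivAt (fun τ : ℝ => 1 - exp (-τ)) 1 0 := by
    simpa using ((hasDerivAt_neg (0 : ℝ)).exp).const_sub 1
  have slope_inv := hasDerivAt.tendsto_slope_zero_right.inv₀ one_ne_zero
  rw [inv_one] at slope_inv
  refine slope_inv.congr fun τ => ?_
  simp [div_eq_mul_inv, mul_comm]

lemma tendsto_pow_mul_tsum_pow_mul_exp_neg (p : ℕ) :
    Tendsto (fun τ : ℝ => τ ^ (p + 1) * ∑' d : ℕ+, (d : ℝ) ^ p * exp (-(d * τ)))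
      (𝓝[>] 0) (𝓝 p.factorial) := by
  have exp_lim : Tendsto (fun τ : ℝ => exp (-τ)) (𝓝[>] 0) (𝓝 1) :=
    ((by fun_prop : Continuous fun τ : ℝ => exp (-τ)).tendsto' 0 1 (by simp)).mono_left
      nhdsWithin_le_nhds
  have pow_lim := tendsto_div_one_sub_exp_neg.pow (p + 1)
  have lower : Tendsto (fun τ : ℝ => (p.factorial : ℝ) * (exp (-τ) ^ (p + 1) *
      (τ / (1 - exp (-τ))) ^ (p + 1))) (𝓝[>] 0) (𝓝 p.factorial) := by
    simpa using ((exp_lim.pow (p + 1)).mul pow_lim).const_mul (p.factorial : ℝ)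
  have upper : Tendsto (fun τ : ℝ => (p.factorial : ℝ) * (exp (-τ) *
      (τ / (1 - exp (-τ))) ^ (p + 1))) (𝓝[>] 0) (𝓝 p.factorial) := by
    simpa using (exp_lim.mul pow_lim).const_mul (p.factorial : ℝ)
  refine tendsto_of_tendsto_of_tendsto_of_le_of_le' lower upper ?_ ?_ <;>
    filter_upwards [self_mem_nhdsWithin] with τ (hτ : 0 < τ)
  · calc _ = τ ^ (p + 1) * (p.factorial * exp (-τ) ^ (p + 1) *
          (1 / (1 - exp (-τ)) ^ (p + 1))) := by rw [div_pow]; ring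
      _ ≤ _ := by gcongr; exact le_tsum_pnat_pow_mul_exp_neg p hτ
  · calc _ ≤ τ ^ (p + 1) * (p.factorial * exp (-τ) * (1 / (1 - exp (-τ)) ^ (p + 1))) := by
          gcongr; exact tsum_pnat_pow_mul_exp_neg_le p hτ
      _ = _ := by rw [div_pow]; ring

variable {b : ℕ → ℝ} {t : ℝ}

lemma hasSum_sum_divisors_mul_exp_neg (hb : ∀ r, 0 ≤ b r)
    (hsum : Summable fun r : ℕ+ => b r / (r : ℝ) ^ (p + 1)) (ht : 0 < t) :
    HasSum (fun m : ℕ+ => (∑ q ∈ (m : ℕ).divisorsAntidiagonal, (q.1 : ℝ) ^ p * b q.2) *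
        exp (-(m * t)))
      (∑' r : ℕ+, b r * ∑' d : ℕ+, (d : ℝ) ^ p * exp (-(d * (r * t)))) := by
  let F : ℕ → ℕ → ℝ := fun d r => b r * ((d : ℝ) ^ p * exp (-(d * (r * t))))
  have row (r : ℕ+) : HasSum (fun d : ℕ+ => F d r)
      (b r * ∑' d : ℕ+, (d : ℝ) ^ p * exp (-(d * (r * t)))) :=
    (summable_pnat_pow_mul_exp_neg p (by positivity)).hasSum.mul_left _
  have rows_summable : Summable fun r : ℕ+ =>
      b r * ∑' d : ℕ+, (d : ℝ) ^ p * exp (-(d * (r * t))) := by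
    refine Summable.of_nonneg_of_le
      (fun r => mul_nonneg (hb r) (tsum_nonneg fun d => by positivity)) (fun r => ?_)
      (hsum.mul_right (powExpBound p / t ^ (p + 1)))
    have le := pow_mul_tsum_pow_mul_exp_neg_le p (τ := r * t) (by positivity)
    rw [← le_div_iff₀' (by positivity), mul_pow] at le
    calc _ ≤ b r * (powExpBound p / ((r : ℝ) ^ (p + 1) * t ^ (p + 1))) :=
          mul_le_mul_of_nonneg_left le (hb r)
      _ = _ := by rw [div_mul_div_comm, mul_div_assoc]
  have summable_prod : Summable fun q : ℕ+ × ℕ+ => F q.2 q.1 :=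
    (summable_prod_of_nonneg fun q => mul_nonneg (hb _) (by positivity)).2
      ⟨fun r => (row r).summable, rows_summable.congr fun r => (row r).tsum_eq.symm⟩
  have hasSum_prod : HasSum (fun q : ℕ+ × ℕ+ => F q.1 q.2) _ :=
    (Equiv.prodComm ℕ+ ℕ+).hasSum_iff.1 summable_prod.hasSum
  rw [← (summable_prod.hasSum.prod_fiberwise row).tsum_eq] at hasSum_prod
  refine (hasSum_sum_divisorsAntidiagonal hasSum_prod).congr_fun fun m => ?_
  rw [Finset.sum_mul]
  refine Finset.sum_congr rfl fun q hq => ?_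
  rw [← (Nat.mem_divisorsAntidiagonal.1 hq).1]
  push_cast
  rw [mul_assoc (q.1 : ℝ)]
  ring

-- Summing first over the cofactor `d = m / r` reduces the claim to `b = 1`, by Tannery's theorem.
lemma tendsto_pow_mul_tsum_sum_divisors (hb : ∀ r, 0 ≤ b r)
    (hsum : Summable fun r : ℕ+ => b r / (r : ℝ) ^ (p + 1)) :
    Tendsto (fun t : ℝ => t ^ (p + 1) * ∑' m : ℕ+,
        (∑ q ∈ (m : ℕ).divisorsAntidiagonal, (q.1 : ℝ) ^ p * b q.2) * exp (-(m * t)))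
      (𝓝[>] 0) (𝓝 ((p.factorial : ℝ) * ∑' r : ℕ+, b r / (r : ℝ) ^ (p + 1))) := by
  let g : ℝ → ℝ := fun τ => τ ^ (p + 1) * ∑' d : ℕ+, (d : ℝ) ^ p * exp (-(d * τ))
  have g_nonneg {τ : ℝ} (hτ : 0 < τ) : 0 ≤ g τ :=
    mul_nonneg (by positivity) (tsum_nonneg fun d => by positivity)
  have tannery : Tendsto (fun t : ℝ => ∑' r : ℕ+, b r / (r : ℝ) ^ (p + 1) * g (r * t)) (𝓝[>] 0)
      (𝓝 (∑' r : ℕ+, b r / (r : ℝ) ^ (p + 1) * p.factorial)) := by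
    refine tendsto_tsum_of_dominated_convergence (hsum.mul_right (powExpBound p))
      (fun r => ((tendsto_pow_mul_tsum_pow_mul_exp_neg p).comp ?_).const_mul _) ?_
    · exact tendsto_nhdsWithin_iff.2 ⟨((continuous_const_mul (r : ℝ)).tendsto' 0 0
        (mul_zero _)).mono_left nhdsWithin_le_nhds,
        eventually_nhdsWithin_of_forall fun t ht =>
          Set.mem_Ioi.2 (mul_pos (Nat.cast_pos.2 r.pos) (Set.mem_Ioi.1 ht))⟩
    · filter_upwards [self_mem_nhdsWithin] with t (ht : 0 < t) r
      have hr : (0 : ℝ) < r * t := by positivity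
      rw [norm_of_nonneg (mul_nonneg (div_nonneg (hb r) (by positivity)) (g_nonneg hr))]
      exact mul_le_mul_of_nonneg_left (pow_mul_tsum_pow_mul_exp_neg_le p hr)
        (div_nonneg (hb r) (by positivity))
  rw [tsum_mul_right, mul_comm] at tannery
  refine tannery.congr' ?_
  filter_upwards [self_mem_nhdsWithin] with t (ht : 0 < t)
  rw [(hasSum_sum_divisors_mul_exp_neg hb hsum ht).tsum_eq, ← tsum_mul_left]
  refine tsum_congr fun r => ?_
  have hr : (r : ℝ) ^ (p + 1) ≠ 0 := by positivity
  simp only [g]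
  rw [mul_pow, div_mul_eq_mul_div, div_eq_iff hr]
  ring

end PowerExponentialSums

section ExponentialMoments

/-- The moments `∑ lam(m) m^j` of a sequence of masses on `ℕ`. -/
noncomputable def seqMoment (lam : ℕ → ℝ) (j : ℕ) : ℝ := ∑' m : ℕ, lam m * (m : ℝ) ^ j

/-- The exponentially damped weights `w(m) e^(-mt)`. Up to sign, their moments are the derivatives
in `t` of the exponent `∑ w(m) e^(-mt)` of the saddle-point analysis. -/
noncomputable def expTilt (w : ℕ → ℝ) (t : ℝ) (m : ℕ) : ℝ := w m * exp (-(m * t))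

/-- Weights that grow like `c m^k` on average, in the Abelian sense that their damped moments behave
like those of `c m^k` as `t → 0`. The pointwise lower bound rules out weights concentrated on an
arithmetic progression, for which the saddle point on a circle would not be unique. -/
structure HasPowerGrowth (w : ℕ → ℝ) (k : ℕ) (c : ℝ) : Prop where
  map_zero : w 0 = 0
  const_pos : 0 < c
  exists_mul_pow_le : ∃ b : ℝ, 0 < b ∧ ∀ m : ℕ, m ≠ 0 → b * (m : ℝ) ^ k ≤ w m
  summable : ∀ (j : ℕ) {t : ℝ}, 0 < t → Summable fun m : ℕ => expTilt w t m * (m : ℝ) ^ j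
  tendsto_seqMoment : ∀ j : ℕ, Tendsto (fun t : ℝ => t ^ (k + j + 1) * seqMoment (expTilt w t) j)
    (𝓝[>] 0) (𝓝 ((k + j).factorial * c))

namespace HasPowerGrowth

variable {w : ℕ → ℝ} {k : ℕ} {c : ℝ}

lemma const_mul (hw : HasPowerGrowth w k c) {x : ℝ} (hx : 0 < x) :
    HasPowerGrowth (fun m => x * w m) k (x * c) := by
  have tilt (t : ℝ) (m : ℕ) : expTilt (fun m => x * w m) t m = x * expTilt w t m :=
    mul_assoc _ _ _
  refine ⟨by simp [hw.map_zero], mul_pos hx hw.const_pos, ?_, fun j t ht => ?_, fun j => ?_⟩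
  · obtain ⟨b, hb, le⟩ := hw.exists_mul_pow_le
    refine ⟨x * b, mul_pos hx hb, fun m hm => ?_⟩
    rw [mul_assoc]
    exact mul_le_mul_of_nonneg_left (le m hm) hx.le
  · simpa only [tilt, mul_assoc] using (hw.summable j ht).mul_left x
  · simpa only [seqMoment, tilt, mul_assoc, tsum_mul_left, mul_left_comm _ x]
      using (hw.tendsto_seqMoment j).const_mul x

variable (hw : HasPowerGrowth w k c)

include hw

lemma nonneg (m : ℕ) : 0 ≤ w m := by
  obtain ⟨b, hb, le⟩ := hw.exists_mul_pow_le
  rcases eq_or_ne m 0 with rfl | hm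
  · exact hw.map_zero.ge
  · exact (by positivity : 0 ≤ b * (m : ℝ) ^ k).trans (le m hm)

lemma expTilt_nonneg (t : ℝ) (m : ℕ) : 0 ≤ expTilt w t m :=
  mul_nonneg (hw.nonneg m) (exp_pos _).le

lemma antitone_expTilt_mul_pow (j m : ℕ) : Antitone fun t => expTilt w t m * (m : ℝ) ^ j :=
  fun _ _ h => mul_le_mul_of_nonneg_right
    (mul_le_mul_of_nonneg_left (exp_le_exp.2 (by gcongr)) (hw.nonneg m)) (by positivity)

lemma summable_expTilt {t : ℝ} (ht : 0 < t) : Summable (expTilt w t) := by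
  simpa using hw.summable 0 ht

lemma seqMoment_pos (j : ℕ) {t : ℝ} (ht : 0 < t) : 0 < seqMoment (expTilt w t) j := by
  refine (hw.summable j ht).tsum_pos
    (fun m => mul_nonneg (hw.expTilt_nonneg t m) (by positivity)) 1 ?_
  obtain ⟨b, hb, le⟩ := hw.exists_mul_pow_le
  have : 0 < w 1 := hb.trans_le (by simpa using le 1 one_ne_zero)
  unfold expTilt
  positivity

lemma antitoneOn_seqMoment (j : ℕ) : AntitoneOn (fun t => seqMoment (expTilt w t) j) (Set.Ioi 0) :=
  fun _ ht _ hu h => (hw.summable j hu).tsum_le_tsum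
    (fun m => hw.antitone_expTilt_mul_pow j m h) (hw.summable j ht)

lemma continuousOn_seqMoment (j : ℕ) {a : ℝ} (ha : 0 < a) :
    ContinuousOn (fun t => seqMoment (expTilt w t) j) (Set.Ici a) := by
  refine continuousOn_tsum (fun m => by unfold expTilt; fun_prop) (hw.summable j ha)
    fun m t ht => ?_
  rw [norm_of_nonneg (mul_nonneg (hw.expTilt_nonneg t m) (by positivity))]
  exact hw.antitone_expTilt_mul_pow j m ht

lemma tendsto_seqMoment_atTop (j : ℕ) :
    Tendsto (fun t => seqMoment (expTilt w t) j) (𝓝[>] 0) atTop := by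
  have inv_pow : Tendsto (fun t : ℝ => (t ^ (k + j + 1))⁻¹) (𝓝[>] 0) atTop := by
    simpa only [Function.comp_def, inv_pow] using
      (tendsto_pow_atTop (k + j).succ_ne_zero).comp (tendsto_inv_nhdsGT_zero (𝕜 := ℝ))
  refine ((hw.tendsto_seqMoment j).pos_mul_atTop
    (mul_pos (by positivity) hw.const_pos) inv_pow).congr' ?_
  filter_upwards [self_mem_nhdsWithin] with t (ht : 0 < t)
  field_simp

lemma eventually_exists_seqMoment_one_eq :
    ∀ᶠ n : ℕ in atTop, ∃ t, 0 < t ∧ seqMoment (expTilt w t) 1 = n := by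
  filter_upwards [tendsto_natCast_atTop_atTop.eventually_ge_atTop
    (seqMoment (expTilt w 1) 1)] with n hn
  obtain ⟨a, ha, ha_pos, ha_lt⟩ :=
    (((hw.tendsto_seqMoment_atTop 1).eventually_ge_atTop n).and (Ioo_mem_nhdsGT one_pos)).exists
  obtain ⟨t, ht, ht_eq⟩ := intermediate_value_Icc' ha_lt.le
    ((hw.continuousOn_seqMoment 1 ha_pos).mono Set.Icc_subset_Ici_self) ⟨hn, ha⟩
  exact ⟨t, ha_pos.trans_le ht.1, ht_eq⟩

lemma exists_saddlePoint :
    ∃ t : ℕ → ℝ, Tendsto t atTop (𝓝[>] 0) ∧ ∀ᶠ n in atTop, seqMoment (expTilt w (t n)) 1 = n := by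
  obtain ⟨t, ht⟩ := hw.eventually_exists_seqMoment_one_eq.choice
  refine ⟨t, tendsto_nhdsWithin_iff.2 ⟨?_, ht.mono fun n h => h.1⟩, ht.mono fun n h => h.2⟩
  rw [Metric.tendsto_nhds]
  intro ε hε
  filter_upwards [ht, tendsto_natCast_atTop_atTop.eventually_gt_atTop
    (seqMoment (expTilt w ε) 1)] with n ⟨ht_pos, ht_eq⟩ hn
  rw [dist_zero_right, norm_of_nonneg ht_pos.le]
  by_contra! hεt
  have := hw.antitoneOn_seqMoment 1 hε ht_pos hεt
  linarith

end HasPowerGrowth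

end ExponentialMoments

section LatticeWeights

/-- The weights `latticeCount ℓ m / m` of the exponential formula for commuting `ℓ`-tuples. -/
noncomputable def latticeWeight (ℓ m : ℕ) : ℝ := latticeCount ℓ m / m

lemma latticeWeight_mul_pow (k j : ℕ) {m : ℕ} (hm : m ≠ 0) :
    latticeWeight (k + 2) m * (m : ℝ) ^ j = ∑ q ∈ m.divisorsAntidiagonal,
      (q.1 : ℝ) ^ (k + j) * ((q.2 : ℝ) ^ j * latticeWeight (k + 1) q.2) := by
  have cast_ne_zero : (m : ℝ) ≠ 0 := by positivity
  rw [latticeWeight, latticeCount_succ' _ hm, div_mul_eq_mul_div, div_eq_iff cast_ne_zero,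
    Nat.cast_sum, Finset.sum_mul, Finset.sum_mul]
  refine Finset.sum_congr rfl fun q hq => ?_
  obtain ⟨rfl, -⟩ := Nat.mem_divisorsAntidiagonal.1 hq
  have : (q.2 : ℝ) ≠ 0 := fun h => cast_ne_zero (by push_cast; rw [h, mul_zero])
  push_cast
  rw [latticeWeight]
  field_simp
  ring

lemma pow_mul_latticeWeight_div_pow (k j : ℕ) (r : ℕ+) :
    (r : ℝ) ^ j * latticeWeight (k + 1) r / (r : ℝ) ^ (k + j + 1) =
      latticeCount (k + 1) r / (r : ℝ) ^ (k + 2) := by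
  have : (r : ℝ) ≠ 0 := by positivity
  rw [latticeWeight]
  field_simp
  ring

lemma latticeWeight_nonneg (ℓ m : ℕ) : 0 ≤ latticeWeight ℓ m := by
  unfold latticeWeight; positivity

lemma summable_pow_mul_latticeWeight (k j : ℕ) : Summable fun r : ℕ+ =>
    (r : ℝ) ^ j * latticeWeight (k + 1) r / (r : ℝ) ^ (k + j + 1) := by
  simpa only [pow_mul_latticeWeight_div_pow] using
    summable_latticeCount_div_pow (Nat.lt_succ_self (k + 1))

lemma latticeWeight_zero_right (ℓ : ℕ) : latticeWeight ℓ 0 = 0 := by simp [latticeWeight]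

lemma hasSum_expTilt_latticeWeight_mul_pow (k j : ℕ) {t : ℝ} (ht : 0 < t) :
    HasSum (fun m : ℕ => expTilt (latticeWeight (k + 2)) t m * (m : ℝ) ^ j)
      (∑' m : ℕ+, (∑ q ∈ (m : ℕ).divisorsAntidiagonal,
        (q.1 : ℝ) ^ (k + j) * ((q.2 : ℝ) ^ j * latticeWeight (k + 1) q.2)) * exp (-(m * t))) := by
  rw [← PNat.coe_injective.hasSum_iff]
  · refine (hasSum_sum_divisors_mul_exp_neg (b := fun r => (r : ℝ) ^ j * latticeWeight (k + 1) r)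
      (fun r => mul_nonneg (by positivity) (latticeWeight_nonneg _ _))
      (summable_pow_mul_latticeWeight k j) ht).summable.hasSum.congr_fun fun m => ?_
    rw [Function.comp_apply, expTilt, mul_right_comm, latticeWeight_mul_pow k j m.ne_zero]
  · intro m hm
    have : m = 0 := by_contra fun h => hm ⟨⟨m, Nat.pos_of_ne_zero h⟩, rfl⟩
    simp [this, expTilt, latticeWeight_zero_right]

lemma hasPowerGrowth_latticeWeight (k : ℕ) : HasPowerGrowth (latticeWeight (k + 2)) k
    (∑' r : ℕ+, latticeCount (k + 1) r / (r : ℝ) ^ (k + 2)) where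
  map_zero := latticeWeight_zero_right _
  const_pos := (summable_latticeCount_div_pow (Nat.lt_succ_self (k + 1))).tsum_pos
    (fun _ => by positivity) 1 (by simp [latticeCount_one_right])
  exists_mul_pow_le := by
    refine ⟨1, one_pos, fun m hm => ?_⟩
    rw [one_mul, latticeWeight, le_div_iff₀ (by positivity), ← pow_succ]
    exact_mod_cast pow_le_latticeCount_succ (k + 1) hm
  summable j _ ht := (hasSum_expTilt_latticeWeight_mul_pow k j ht).summable
  tendsto_seqMoment j := by
    have lim := tendsto_pow_mul_tsum_sum_divisors
      (b := fun r => (r : ℝ) ^ j * latticeWeight (k + 1) r)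
      (fun r => mul_nonneg (by positivity) (latticeWeight_nonneg _ _))
      (summable_pow_mul_latticeWeight k j)
    simp only [pow_mul_latticeWeight_div_pow] at lim
    refine lim.congr' ?_
    filter_upwards [self_mem_nhdsWithin] with t (ht : 0 < t)
    rw [seqMoment, (hasSum_expTilt_latticeWeight_mul_pow k j ht).tsum_eq]

end LatticeWeights

section ExponentialFormula

/-- `h` is the coefficient sequence of the exponential of the power series with coefficients `a`,
expressed by the recursion coming from `(exp A)' = A' exp A`. -/
structure IsExpCoeff (a h : ℕ → ℂ) : Prop where
  zero : h 0 = 1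
  succ : ∀ n : ℕ, ((n : ℂ) + 1) * h (n + 1) =
    ∑ i ∈ Finset.range (n + 1), ((i : ℂ) + 1) * a (i + 1) * h (n - i)

open FormalMultilinearSeries

variable {a h : ℕ → ℂ}

lemma hasFPowerSeriesOnBall_ofScalarsSum (ha : 1 ≤ (ofScalars ℂ a).radius) :
    HasFPowerSeriesOnBall (ofScalarsSum (E := ℂ) a) (ofScalars ℂ a) 0 1 :=
  ((ofScalars ℂ a).hasFPowerSeriesOnBall (zero_lt_one.trans_le ha)).mono zero_lt_one ha

lemma differentiableOn_ofScalarsSum (ha : 1 ≤ (ofScalars ℂ a).radius) :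
    DifferentiableOn ℂ (ofScalarsSum (E := ℂ) a) (Metric.ball 0 1) := by
  refine (hasFPowerSeriesOnBall_ofScalarsSum ha).differentiableOn.mono fun z hz => ?_
  rwa [← ENNReal.ofReal_one, Metric.eball_ofReal]

lemma iteratedDeriv_ofScalarsSum_zero (ha : 1 ≤ (ofScalars ℂ a).radius) (m : ℕ) :
    iteratedDeriv m (ofScalarsSum (E := ℂ) a) 0 = m.factorial * a m := by
  rw [iteratedDeriv_eq_iteratedFDeriv,
    ← (hasFPowerSeriesOnBall_ofScalarsSum ha).factorial_smul 1 m]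
  simp

lemma iteratedDeriv_exp_ofScalarsSum_zero (ha : 1 ≤ (ofScalars ℂ a).radius) (ha_zero : a 0 = 0)
    (hh : IsExpCoeff a h) (n : ℕ) :
    iteratedDeriv n (fun q => Complex.exp (ofScalarsSum (E := ℂ) a q)) 0 = n.factorial * h n := by
  set A : ℂ → ℂ := ofScalarsSum (E := ℂ) a
  have unit_ball := Metric.ball_mem_nhds (0 : ℂ) one_pos
  have analytic_A : AnalyticAt ℂ A 0 := (differentiableOn_ofScalarsSum ha).analyticAt unit_ball
  have analytic_exp : AnalyticAt ℂ (fun q => Complex.exp (A q)) 0 := analytic_A.cexp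
  have deriv_exp : deriv (fun q => Complex.exp (A q)) =ᶠ[𝓝 0]
      fun q => deriv A q * Complex.exp (A q) := by
    filter_upwards [unit_ball] with q hq
    have := (differentiableOn_ofScalarsSum ha).differentiableAt (Metric.isOpen_ball.mem_nhds hq)
    rw [this.hasDerivAt.cexp.deriv, mul_comm]
  induction n using Nat.strong_induction_on with
  | _ n ih =>
    cases n with
    | zero =>
      have : A 0 = 0 := by simp only [A, ofScalarsSum_zero, ha_zero, zero_smul]
      simp [this, hh.zero]
    | succ n =>
      rw [iteratedDeriv_succ', deriv_exp.iteratedDeriv_eq,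
        iteratedDeriv_fun_mul analytic_A.deriv.contDiffAt analytic_exp.contDiffAt,
        Nat.factorial_succ, Nat.cast_mul, Nat.cast_succ, mul_comm (_ + 1 : ℂ), mul_assoc, hh.succ,
        Finset.mul_sum]
      refine Finset.sum_congr rfl fun i hi => ?_
      rw [← iteratedDeriv_succ', iteratedDeriv_ofScalarsSum_zero ha, ih (n - i) (by omega),
        ← Nat.choose_mul_factorial_mul_factorial (Finset.mem_range_succ_iff.1 hi),
        Nat.factorial_succ]
      push_cast
      ring

lemma integral_mul_exp_neg_nat_eq_circleIntegral (f : ℂ → ℂ) (n : ℕ) {r : ℝ} (hr : 0 < r) :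
    Complex.I * ∫ θ in (-π)..π,
        f (r * Complex.exp (θ * Complex.I)) * Complex.exp (-(n * (θ * Complex.I))) =
      r ^ n * ∮ z in C(0, r), (1 / (z - 0) ^ (n + 1)) • f z := by
  have periodic : Function.Periodic (fun θ : ℝ =>
      f (r * Complex.exp (θ * Complex.I)) * Complex.exp (-(n * (θ * Complex.I)))) (2 * π) := by
    intro θ
    have : Complex.exp (((θ + 2 * π : ℝ) : ℂ) * Complex.I) = Complex.exp (θ * Complex.I) := by
      push_cast
      rw [add_mul, Complex.exp_add, Complex.exp_two_pi_mul_I, mul_one]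
    simp only [this, Complex.exp_neg, Complex.exp_nat_mul]
  have shift := periodic.intervalIntegral_add_eq (-π) 0
  rw [show -π + 2 * π = π by ring, zero_add] at shift
  rw [shift, circleIntegral, ← intervalIntegral.integral_const_mul,
    ← intervalIntegral.integral_const_mul]
  refine intervalIntegral.integral_congr fun θ _ => ?_
  simp only [deriv_circleMap, circleMap, smul_eq_mul, zero_add, sub_zero]
  rw [Complex.exp_neg, Complex.exp_nat_mul]
  have := Complex.exp_ne_zero (θ * Complex.I)
  have : (r : ℂ) ≠ 0 := by exact_mod_cast hr.ne'
  field_simp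
  ring

lemma pow_mul_iteratedDeriv_eq_integral {f : ℂ → ℂ} {r : ℝ} (hr : 0 < r)
    (hf : DifferentiableOn ℂ f (Metric.closedBall 0 r)) (n : ℕ) :
    (r : ℂ) ^ n * iteratedDeriv n f 0 = n.factorial / (2 * π) *
      ∫ θ in (-π)..π,
        f (r * Complex.exp (θ * Complex.I)) * Complex.exp (-(n * (θ * Complex.I))) := by
  have cauchy := hf.circleIntegral_one_div_sub_center_pow_smul hr n
  have param := integral_mul_exp_neg_nat_eq_circleIntegral f n hr
  rw [cauchy, smul_eq_mul] at param
  have : (n.factorial : ℂ) ≠ 0 := by exact_mod_cast n.factorial_ne_zero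
  have : (π : ℂ) ≠ 0 := by exact_mod_cast pi_ne_zero
  refine mul_left_cancel₀ Complex.I_ne_zero ?_
  rw [mul_left_comm Complex.I (_ / _), param]
  field_simp

lemma IsExpCoeff.pow_mul_eq_integral (hh : IsExpCoeff a h) (ha : 1 ≤ (ofScalars ℂ a).radius)
    (ha_zero : a 0 = 0) {r : ℝ} (hr : 0 < r) (hr_lt : r < 1) (n : ℕ) :
    (r : ℂ) ^ n * h n = 1 / (2 * π) * ∫ θ in (-π)..π,
      Complex.exp (∑' m : ℕ, a m * (r * Complex.exp (θ * Complex.I)) ^ m) *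
        Complex.exp (-(n * (θ * Complex.I))) := by
  have cauchy := pow_mul_iteratedDeriv_eq_integral hr
    ((differentiableOn_ofScalarsSum ha).cexp.mono (Metric.closedBall_subset_ball hr_lt)) n
  rw [iteratedDeriv_exp_ofScalarsSum_zero ha ha_zero hh] at cauchy
  simp only [ofScalarsSum_eq_tsum, smul_eq_mul] at cauchy
  refine mul_left_cancel₀ (Nat.cast_ne_zero.2 n.factorial_ne_zero) ?_
  rw [mul_left_comm, cauchy]
  ring

end ExponentialFormula

section OrbitPolynomial

/-- The polynomial `H_{ℓ,n}`, evaluated at a complex argument. -/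
noncomputable def orbitPolynomial (ℓ n : ℕ) (y : ℂ) : ℂ :=
  1 / n.factorial * ∑ k ∈ Finset.range (n + 1), (Acount ℓ n k : ℂ) * y ^ k

lemma orbitPolynomial_eq_sum_range {ℓ n N : ℕ} (hN : n ≤ N) (y : ℂ) :
    orbitPolynomial ℓ n y =
      1 / n.factorial * ∑ k ∈ Finset.range (N + 1), (Acount ℓ n k : ℂ) * y ^ k := by
  rw [orbitPolynomial]
  congr 1
  refine Finset.sum_subset (Finset.range_mono (by omega)) fun k _ hk => ?_
  rw [Acount_eq_zero_of_lt (by simpa using hk), Nat.cast_zero, zero_mul]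

lemma factorial_mul_orbitPolynomial_succ (ℓ n : ℕ) (y : ℂ) :
    (n + 1).factorial * orbitPolynomial ℓ (n + 1) y =
      y * ∑ k ∈ Finset.range (n + 1), (Acount ℓ (n + 1) (k + 1) : ℂ) * y ^ k := by
  rw [orbitPolynomial, ← mul_assoc, mul_one_div_cancel
    (Nat.cast_ne_zero.2 (n + 1).factorial_ne_zero), one_mul, Finset.sum_range_succ',
    Acount_zero_right ℓ n.succ_ne_zero, Nat.cast_zero, zero_mul, add_zero, Finset.mul_sum]
  exact Finset.sum_congr rfl fun k _ => by ring

lemma succ_mul_orbitPolynomial_succ (ℓ n : ℕ) (y : ℂ) :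
    ((n : ℂ) + 1) * orbitPolynomial ℓ (n + 1) y =
      y * ∑ i ∈ Finset.range (n + 1),
        (latticeCount ℓ (i + 1) : ℂ) * orbitPolynomial ℓ (n - i) y := by
  have count_rec (k : ℕ) : ((n : ℂ) + 1) * Acount ℓ (n + 1) (k + 1) =
      ∑ i ∈ Finset.range (n + 1), (latticeCount ℓ (i + 1) : ℂ) *
        ((n + 1).descFactorial (i + 1) * Acount ℓ (n - i) k) := by
    have := mul_Acount_succ ℓ (n + 1) k
    simp only [Nat.add_sub_add_right] at this
    exact_mod_cast this
  refine mul_left_cancel₀ (Nat.cast_ne_zero.2 (n + 1).factorial_ne_zero : _ ≠ (0 : ℂ)) ?_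
  rw [mul_left_comm, factorial_mul_orbitPolynomial_succ, mul_left_comm, mul_left_comm _ y]
  congr 1
  rw [Finset.mul_sum, Finset.mul_sum]
  simp only [← mul_assoc, count_rec, Finset.sum_mul]
  rw [Finset.sum_comm]
  refine Finset.sum_congr rfl fun i hi => ?_
  have factorial_eq := Nat.factorial_mul_descFactorial (Finset.mem_range.1 hi : i + 1 ≤ n + 1)
  rw [Nat.add_sub_add_right] at factorial_eq
  have : ((n - i).factorial : ℂ) ≠ 0 := Nat.cast_ne_zero.2 (n - i).factorial_ne_zero
  rw [orbitPolynomial_eq_sum_range (n.sub_le i), Finset.mul_sum, Finset.mul_sum, ← factorial_eq]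
  refine Finset.sum_congr rfl fun k _ => ?_
  push_cast
  field_simp

lemma isExpCoeff_orbitPolynomial (ℓ : ℕ) (y : ℂ) :
    IsExpCoeff (fun m => y * latticeWeight ℓ m) (orbitPolynomial ℓ · y) where
  zero := by simp [orbitPolynomial, Acount_zero_zero]
  succ n := by
    rw [succ_mul_orbitPolynomial_succ, Finset.mul_sum]
    refine Finset.sum_congr rfl fun i _ => ?_
    have : (i : ℂ) + 1 ≠ 0 := Nat.cast_add_one_ne_zero i
    simp only [latticeWeight]
    push_cast
    field_simp

end OrbitPolynomial

/-- The trigonometric series `∑ lam(m) e^(imθ)`. -/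
noncomputable def trigSeries (lam : ℕ → ℝ) (θ : ℝ) : ℂ :=
  ∑' m : ℕ, (lam m : ℂ) * Complex.exp ((m * θ : ℝ) * Complex.I)

namespace HasPowerGrowth

variable {w : ℕ → ℝ} {k : ℕ} {c : ℝ} (hw : HasPowerGrowth w k c)

include hw

lemma summable_mul_pow {r : ℝ} (hr : 0 ≤ r) (hr_lt : r < 1) : Summable fun m => w m * r ^ m := by
  rcases hr.eq_or_lt with rfl | hr
  · exact summable_of_ne_finset_zero (s := {0}) fun m hm => by simp_all
  · refine (hw.summable_expTilt (neg_pos.2 (log_neg hr hr_lt))).congr fun m => ?_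
    rw [expTilt, mul_neg, neg_neg, exp_nat_mul, exp_log hr]

lemma one_le_radius (y : ℂ) :
    1 ≤ (FormalMultilinearSeries.ofScalars ℂ fun m => y * (w m : ℂ)).radius := by
  refine ENNReal.le_of_forall_nnreal_lt fun r hr => ?_
  refine FormalMultilinearSeries.le_radius_of_summable _ ?_
  refine ((hw.summable_mul_pow r.2 (by exact_mod_cast hr)).mul_left ‖y‖).congr fun m => ?_
  rw [FormalMultilinearSeries.ofScalars_norm, norm_mul, Complex.norm_real,
    norm_of_nonneg (hw.nonneg m), mul_assoc]
  rfl

lemma exp_neg_mul_coeff_eq_integral {y : ℂ} {h : ℕ → ℂ} (hh : IsExpCoeff (fun m => y * w m) h)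
    {t : ℝ} (ht : 0 < t) (n : ℕ) :
    Complex.exp (-(n * t)) * h n = 1 / (2 * π) * ∫ θ in (-π)..π,
      Complex.exp (y * trigSeries (expTilt w t) θ - n * (θ * Complex.I)) := by
  have cauchy := hh.pow_mul_eq_integral (hw.one_le_radius y) (by simp [hw.map_zero])
    (exp_pos (-t)) (exp_lt_one_iff.2 (neg_lt_zero.2 ht)) n
  rw [← Complex.ofReal_pow, ← exp_nat_mul] at cauchy
  convert cauchy using 2
  · push_cast; ring_nf
  · refine intervalIntegral.integral_congr fun θ _ => ?_
    simp only [trigSeries, ← tsum_mul_left, expTilt]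
    rw [← Complex.exp_add, sub_eq_add_neg]
    congr 2
    refine tsum_congr fun m => ?_
    rw [mul_pow, ← Complex.ofReal_pow, ← exp_nat_mul, ← Complex.exp_nat_mul]
    push_cast
    ring_nf

end HasPowerGrowth

section Damping

/-- The loss `∑ lam(m) (1 - cos(mθ))` in the real part of `∑ lam(m) e^(imθ)` when the angle moves
from `0` to `θ`. -/
noncomputable def damping (lam : ℕ → ℝ) (θ : ℝ) : ℝ := ∑' m : ℕ, lam m * (1 - cos (m * θ))

lemma sq_div_five_le_one_sub_cos {y : ℝ} (hy : |y| ≤ π) : y ^ 2 / 5 ≤ 1 - cos y := by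
  have cos_le := cos_le_one_sub_mul_cos_sq hy
  have five_le : (1 : ℝ) / 5 ≤ 2 / π ^ 2 := by
    rw [div_le_div_iff₀ (by norm_num) (by positivity)]
    nlinarith [pi_lt_d2, pi_pos]
  nlinarith [sq_nonneg y]

lemma summable_mul_one_sub_cos {lam : ℕ → ℝ} (hlam : Summable lam) (φ : ℕ → ℝ) :
    Summable fun m => lam m * (1 - cos (φ m)) := by
  refine .of_norm_bounded (hlam.norm.mul_right 2) fun m => ?_
  rw [norm_mul]
  gcongr
  rw [norm_of_nonneg (sub_nonneg.2 (cos_le_one _))]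
  linarith [neg_one_le_cos (φ m)]

lemma mul_one_sub_cos_nonneg {a : ℝ} (ha : 0 ≤ a) (y : ℝ) : 0 ≤ a * (1 - cos y) :=
  mul_nonneg ha (sub_nonneg.2 (cos_le_one y))

lemma normSq_one_sub_mul_exp_mul_I (r θ : ℝ) :
    Complex.normSq (1 - r * Complex.exp (θ * Complex.I)) =
      (1 - r) ^ 2 + 2 * r * (1 - cos θ) := by
  rw [Complex.normSq_apply]
  simp only [Complex.sub_re, Complex.sub_im, Complex.one_re, Complex.one_im, Complex.re_ofReal_mul,
    Complex.im_ofReal_mul, Complex.exp_ofReal_mul_I_re, Complex.exp_ofReal_mul_I_im]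
  linear_combination r ^ 2 * sin_sq_add_cos_sq θ

lemma hasSum_exp_mul_one_sub_cos {t : ℝ} (ht : 0 < t) (θ : ℝ) :
    HasSum (fun m : ℕ => exp (-(m * t)) * (1 - cos (m * θ)))
      ((1 - exp (-t))⁻¹ - (1 - exp (-t) * Complex.exp (θ * Complex.I))⁻¹.re) := by
  have exp_lt_one : exp (-t) < 1 := exp_lt_one_iff.2 (neg_lt_zero.2 ht)
  have norm_lt_one : ‖(exp (-t) : ℂ) * Complex.exp (θ * Complex.I)‖ < 1 := by
    rwa [norm_mul, Complex.norm_exp_ofReal_mul_I, mul_one, Complex.norm_real,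
      norm_of_nonneg (exp_pos _).le]
  refine ((hasSum_geometric_of_lt_one (exp_pos _).le exp_lt_one).sub
    (Complex.hasSum_re (hasSum_geometric_of_norm_lt_one norm_lt_one))).congr_fun fun m => ?_
  have exp_pow : exp (-t) ^ m = exp (-(m * t)) := by rw [← exp_nat_mul, mul_neg]
  have angle : (m : ℂ) * (θ * Complex.I) = (m * θ : ℝ) * Complex.I := by push_cast; ring
  rw [mul_pow, ← Complex.exp_nat_mul, ← Complex.ofReal_pow, Complex.re_ofReal_mul, angle,
    Complex.exp_ofReal_mul_I_re, exp_pow]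
  ring

lemma mul_one_sub_exp_le_norm_one_sub {t θ : ℝ} (ht : 0 < t) (ht' : t ≤ 1 / 2) (htθ : t ≤ |θ|)
    (hθ : |θ| ≤ π) :
    20 / 19 * (1 - exp (-t)) ≤ ‖1 - exp (-t) * Complex.exp (θ * Complex.I)‖ := by
  have exp_le : 1 - exp (-t) ≤ t := by linarith [add_one_le_exp (-t)]
  have exp_lt_one : exp (-t) < 1 := exp_lt_one_iff.2 (neg_lt_zero.2 ht)
  have sq_le : (1 - exp (-t)) ^ 2 ≤ t ^ 2 := pow_le_pow_left₀ (by linarith) exp_le 2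
  have le_one_sub_cos : t ^ 2 / 5 ≤ 1 - cos θ := by
    refine le_trans ?_ (sq_div_five_le_one_sub_cos hθ)
    rw [← sq_abs θ]
    gcongr
  rw [Complex.norm_def, normSq_one_sub_mul_exp_mul_I]
  refine le_sqrt_of_sq_le ?_
  nlinarith [sq_nonneg t]

lemma inv_le_damping_exp {t θ : ℝ} (ht : 0 < t) (ht' : t ≤ 1 / 2) (htθ : t ≤ |θ|) (hθ : |θ| ≤ π) :
    t⁻¹ / 20 ≤ damping (fun m => exp (-(m * t))) θ := by
  have one_sub_pos : 0 < 1 - exp (-t) := sub_pos.2 (exp_lt_one_iff.2 (neg_lt_zero.2 ht))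
  have exp_le : 1 - exp (-t) ≤ t := by linarith [add_one_le_exp (-t)]
  have inv_le : t⁻¹ ≤ (1 - exp (-t))⁻¹ := by gcongr
  have re_le : (1 - exp (-t) * Complex.exp (θ * Complex.I))⁻¹.re ≤
      19 / 20 * (1 - exp (-t))⁻¹ := by
    refine (Complex.re_le_norm _).trans ?_
    rw [norm_inv]
    refine (inv_anti₀ (by positivity) (mul_one_sub_exp_le_norm_one_sub ht ht' htθ hθ)).trans_eq ?_
    rw [mul_inv]
    norm_num
  rw [damping, (hasSum_exp_mul_one_sub_cos ht θ).tsum_eq]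
  linarith

namespace HasPowerGrowth

variable {w : ℕ → ℝ} {k : ℕ} {c : ℝ}

lemma exists_div_le_damping (hw : HasPowerGrowth w k c) :
    ∃ b : ℝ, 0 < b ∧ ∀ {t θ : ℝ}, 0 < t → t ≤ 1 / 2 → t ≤ |θ| → |θ| ≤ π →
      b / t ≤ damping (expTilt w t) θ := by
  obtain ⟨b, hb, le⟩ := hw.exists_mul_pow_le
  refine ⟨b / 20, by positivity, fun {t θ} ht ht' htθ hθ => ?_⟩
  calc b / 20 / t = b * (t⁻¹ / 20) := by ring
    _ ≤ b * damping (fun m => exp (-(m * t))) θ := by gcongr; exact inv_le_damping_exp ht ht' htθ hθ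
    _ ≤ damping (expTilt w t) θ := ?_
  refine hasSum_le (fun m => ?_)
    ((hasSum_exp_mul_one_sub_cos ht θ).summable.hasSum.mul_left b)
    (summable_mul_one_sub_cos (hw.summable_expTilt ht) _).hasSum
  rcases eq_or_ne m 0 with rfl | hm
  · simp
  have le_weight : b ≤ w m :=
    (le_mul_of_one_le_right hb.le (one_le_pow₀ (Nat.one_le_cast.2 hm.bot_lt))).trans (le m hm)
  rw [expTilt, mul_assoc]
  gcongr
  exact mul_one_sub_cos_nonneg (exp_pos _).le _

lemma exists_mul_pow_le_expTilt_mul_one_sub_cos (hw : HasPowerGrowth w k c) :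
    ∃ b : ℝ, 0 < b ∧ ∀ {t θ : ℝ} {m : ℕ}, |θ| ≤ t → m ≠ 0 → m * t ≤ 1 →
      b * θ ^ 2 * (m : ℝ) ^ (k + 2) ≤ expTilt w t m * (1 - cos (m * θ)) := by
  obtain ⟨b, hb, le⟩ := hw.exists_mul_pow_le
  refine ⟨b * exp (-1) / 5, by positivity, fun {t θ m} hθ hm hmt => ?_⟩
  have abs_le : |m * θ| ≤ π := by
    rw [abs_mul, Nat.abs_cast]
    have : m * |θ| ≤ m * t := by gcongr
    linarith [pi_gt_three]
  calc b * exp (-1) / 5 * θ ^ 2 * (m : ℝ) ^ (k + 2)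
      = b * (m : ℝ) ^ k * exp (-1) * ((m * θ) ^ 2 / 5) := by ring
    _ ≤ w m * exp (-(m * t)) * (1 - cos (m * θ)) := by
      refine mul_le_mul (mul_le_mul (le m hm) ?_ (exp_pos _).le (hw.nonneg m))
        (sq_div_five_le_one_sub_cos abs_le) (by positivity) (hw.expTilt_nonneg t m)
      exact exp_le_exp.2 (neg_le_neg hmt)

lemma exists_mul_sq_div_pow_le_damping (hw : HasPowerGrowth w k c) :
    ∃ b : ℝ, 0 < b ∧ ∀ {t θ : ℝ}, 0 < t → t ≤ 1 / 2 → |θ| ≤ t →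
      b * θ ^ 2 / t ^ (k + 3) ≤ damping (expTilt w t) θ := by
  obtain ⟨b, hb, le⟩ := hw.exists_mul_pow_le_expTilt_mul_one_sub_cos
  refine ⟨b / 4 ^ (k + 3), by positivity, fun {t θ} ht ht' hθ => ?_⟩
  set M : ℕ := ⌊1 / (2 * t)⌋₊
  have M_le : (M : ℝ) ≤ 1 / (2 * t) := Nat.floor_le (by positivity)
  have one_le_M : 1 ≤ M := Nat.le_floor (by
    rw [Nat.cast_one, le_div_iff₀ (by positivity)]
    linarith)
  have le_M : 1 / (4 * t) ≤ M := by
    have lt_M : 1 / (2 * t) < M + 1 := Nat.lt_floor_add_one _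
    have one_le : (1 : ℝ) ≤ M := Nat.one_le_cast.2 one_le_M
    have half : 1 / (4 * t) = 1 / (2 * t) / 2 := by field_simp; norm_num
    linarith
  have le_term : ∀ m ∈ Finset.Ico M (2 * M), b * θ ^ 2 * (1 / (4 * t)) ^ (k + 2) ≤
      expTilt w t m * (1 - cos (m * θ)) := by
    intro m hm
    obtain ⟨M_le_m, m_lt⟩ := Finset.mem_Ico.1 hm
    have m_le : (m : ℝ) ≤ 2 * (1 / (2 * t)) :=
      (show (m : ℝ) ≤ 2 * M from mod_cast m_lt.le).trans (by gcongr)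
    have mul_le : m * t ≤ 1 := (mul_le_mul_of_nonneg_right m_le ht.le).trans_eq (by field_simp)
    refine le_trans ?_ (le hθ (by omega) mul_le)
    gcongr
    exact le_M.trans (mod_cast M_le_m)
  calc b / 4 ^ (k + 3) * θ ^ 2 / t ^ (k + 3)
      = 1 / (4 * t) * (b * θ ^ 2 * (1 / (4 * t)) ^ (k + 2)) := by
        rw [mul_left_comm, ← pow_succ', div_pow, mul_pow, one_pow]
        field_simp
    _ ≤ M * (b * θ ^ 2 * (1 / (4 * t)) ^ (k + 2)) := by gcongr
    _ ≤ ∑ m ∈ Finset.Ico M (2 * M), expTilt w t m * (1 - cos (m * θ)) := by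
        simpa [two_mul] using Finset.card_nsmul_le_sum _ _ _ le_term
    _ ≤ damping (expTilt w t) θ :=
        (summable_mul_one_sub_cos (hw.summable_expTilt ht) _).sum_le_tsum _ fun m _ =>
          mul_one_sub_cos_nonneg (hw.expTilt_nonneg t m) _

end HasPowerGrowth

end Damping

section SaddleExponent

variable {lam : ℕ → ℝ}

lemma hasSum_trigSeries (hlam : Summable lam) (θ : ℝ) :
    HasSum (fun m : ℕ => (lam m : ℂ) * Complex.exp ((m * θ : ℝ) * Complex.I))
      (trigSeries lam θ) := by
  refine Summable.hasSum (.of_norm (hlam.norm.congr fun m => ?_))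
  rw [norm_mul, Complex.norm_exp_ofReal_mul_I, mul_one, Complex.norm_real]

lemma continuous_trigSeries (hlam : Summable lam) : Continuous (trigSeries lam) := by
  refine continuous_tsum (fun m => by fun_prop) hlam.norm fun m θ => ?_
  rw [norm_mul, Complex.norm_exp_ofReal_mul_I, mul_one, Complex.norm_real]

/-- The logarithm of the integrand in Cauchy's formula, when the weights are multiplied by `e^z` and
the radius of the circle solves the saddle-point equation `seqMoment lam 1 = n`. It is normalized
by the linear part in `z` of its value at `θ = 0`. -/
noncomputable def saddleExponent (lam : ℕ → ℝ) (z : ℂ) (θ : ℝ) : ℂ :=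
  Complex.exp z * trigSeries lam θ - θ * Complex.I * seqMoment lam 1 - seqMoment lam 0 * (1 + z)

lemma continuous_saddleExponent (hlam : Summable lam) (z : ℂ) :
    Continuous (saddleExponent lam z) := by
  have := continuous_trigSeries hlam
  unfold saddleExponent
  fun_prop

lemma saddleExponent_re (hlam : Summable lam) (z : ℂ) (θ : ℝ) :
    (saddleExponent lam z θ).re =
      seqMoment lam 0 * (exp z.re - 1 - z.re) -
        exp z.re * ∑' m : ℕ, lam m * (1 - cos (z.im + m * θ)) := by
  have term_re (m : ℕ) :
      (Complex.exp z * ((lam m : ℂ) * Complex.exp ((m * θ : ℝ) * Complex.I))).re =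
        exp z.re * lam m - exp z.re * (lam m * (1 - cos (z.im + m * θ))) := by
    rw [mul_left_comm, ← Complex.exp_add, Complex.re_ofReal_mul, Complex.exp_re]
    simp only [Complex.add_re, Complex.re_ofReal_mul, Complex.I_re, Complex.add_im,
      Complex.im_ofReal_mul, Complex.I_im]
    ring_nf
  have mul_re : (Complex.exp z * trigSeries lam θ).re =
      exp z.re * seqMoment lam 0 - exp z.re * ∑' m : ℕ, lam m * (1 - cos (z.im + m * θ)) := by
    refine HasSum.unique (Complex.hasSum_re ((hasSum_trigSeries hlam θ).mul_left _)) ?_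
    simp only [term_re]
    refine .sub (.mul_left _ ?_) ((summable_mul_one_sub_cos hlam _).hasSum.mul_left _)
    simpa [seqMoment] using hlam.hasSum
  rw [saddleExponent, Complex.sub_re, Complex.sub_re, mul_re, Complex.re_ofReal_mul]
  simp only [Complex.mul_re, Complex.mul_im, Complex.add_re, Complex.one_re, Complex.ofReal_re,
    Complex.ofReal_im, Complex.I_re, Complex.I_im]
  ring

lemma one_sub_cos_div_two_sub_le (x y : ℝ) :
    (1 - cos x) / 2 - (1 - cos y) ≤ 1 - cos (y + x) := by
  have cos_x : cos x = cos (y + x) * cos y + sin (y + x) * sin y := by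
    rw [← cos_sub, add_sub_cancel_left]
  rw [cos_x]
  nlinarith [sq_nonneg (sin (y + x) + sin y), sin_sq_add_cos_sq (y + x), sin_sq_add_cos_sq y,
    sq_nonneg (cos (y + x) + cos y - 2)]

lemma damping_nonneg (hlam : ∀ m, 0 ≤ lam m) (θ : ℝ) : 0 ≤ damping lam θ :=
  tsum_nonneg fun m => mul_one_sub_cos_nonneg (hlam m) _

lemma damping_div_two_sub_le (hlam : Summable lam) (hlam_nonneg : ∀ m, 0 ≤ lam m) (β θ : ℝ) :
    damping lam θ / 2 - β ^ 2 / 2 * seqMoment lam 0 ≤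
      ∑' m : ℕ, lam m * (1 - cos (β + m * θ)) := by
  have hasSum_mass : HasSum lam (seqMoment lam 0) := by simpa [seqMoment] using hlam.hasSum
  refine hasSum_le (fun m => ?_) (((summable_mul_one_sub_cos hlam _).hasSum.div_const 2).sub
    (hasSum_mass.mul_left (β ^ 2 / 2))) (summable_mul_one_sub_cos hlam _).hasSum
  calc lam m * (1 - cos (m * θ)) / 2 - β ^ 2 / 2 * lam m
      = lam m * ((1 - cos (m * θ)) / 2 - β ^ 2 / 2) := by ring
    _ ≤ lam m * (1 - cos (β + m * θ)) := by
      refine mul_le_mul_of_nonneg_left ?_ (hlam_nonneg m)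
      linarith [one_sub_cos_div_two_sub_le (m * θ) β, one_sub_sq_div_two_le_cos (x := β)]

lemma exp_le_three_of_abs_le_one {a : ℝ} (ha : |a| ≤ 1) : exp a ≤ 3 :=
  (exp_le_exp.2 (le_of_abs_le ha)).trans exp_one_lt_three.le

lemma saddleExponent_re_le (hlam : Summable lam) (hlam_nonneg : ∀ m, 0 ≤ lam m) {z : ℂ}
    (hz : ‖z‖ ≤ 1) (θ : ℝ) :
    (saddleExponent lam z θ).re ≤ -(damping lam θ / 6) + 3 * (‖z‖ ^ 2 * seqMoment lam 0) := by
  have mass_nonneg : 0 ≤ seqMoment lam 0 :=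
    tsum_nonneg fun m => mul_nonneg (hlam_nonneg m) (by positivity)
  have abs_re_le : |z.re| ≤ 1 := (Complex.abs_re_le_norm z).trans hz
  have exp_sub_le : exp z.re - 1 - z.re ≤ ‖z‖ ^ 2 :=
    (le_of_abs_le (abs_exp_sub_one_sub_id_le abs_re_le)).trans
      (sq_le_sq.2 ((Complex.abs_re_le_norm z).trans (le_abs_self _)))
  have im_sq_le : z.im ^ 2 ≤ ‖z‖ ^ 2 :=
    sq_le_sq.2 ((Complex.abs_im_le_norm z).trans (le_abs_self _))
  have exp_le : exp z.re ≤ 3 := exp_le_three_of_abs_le_one abs_re_le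
  have le_exp : 1 / 3 ≤ exp z.re := by
    rw [← inv_inv (exp _), ← exp_neg, one_div]
    exact inv_anti₀ (exp_pos _) (exp_le_three_of_abs_le_one (by rwa [abs_neg]))
  have shifted_le := mul_le_mul_of_nonneg_left
    (damping_div_two_sub_le hlam hlam_nonneg z.im θ) (exp_pos z.re).le
  have damping_le : 1 / 3 * damping lam θ ≤ exp z.re * damping lam θ :=
    mul_le_mul_of_nonneg_right le_exp (damping_nonneg hlam_nonneg θ)
  have im_term_le : exp z.re * (z.im ^ 2 * seqMoment lam 0) ≤ 3 * (‖z‖ ^ 2 * seqMoment lam 0) := by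
    gcongr
  have re_term_le : seqMoment lam 0 * (exp z.re - 1 - z.re) ≤ ‖z‖ ^ 2 * seqMoment lam 0 := by
    rw [mul_comm]
    gcongr
  have mass_term_nonneg : 0 ≤ ‖z‖ ^ 2 * seqMoment lam 0 := by positivity
  rw [saddleExponent_re hlam]
  linarith

lemma norm_exp_mul_I_sub_le (y : ℝ) :
    ‖Complex.exp (y * Complex.I) - 1 - y * Complex.I + (y : ℂ) ^ 2 / 2‖ ≤ 4 * |y| ^ 3 := by
  have norm_mul_I : ‖(y : ℂ) * Complex.I‖ = |y| := by simp
  rcases le_or_gt |y| 1 with hy | hy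
  · have taylor := Complex.norm_exp_sub_sum_le_norm_mul_exp (y * Complex.I) 3
    have taylor_eq : Complex.exp (y * Complex.I) -
        ∑ m ∈ Finset.range 3, (y * Complex.I) ^ m / (m.factorial : ℂ) =
          Complex.exp (y * Complex.I) - 1 - y * Complex.I + (y : ℂ) ^ 2 / 2 := by
      simp only [Finset.sum_range_succ, Finset.sum_range_zero, Nat.factorial, mul_pow,
        Complex.I_sq]
      push_cast
      ring
    rw [taylor_eq, norm_mul_I, mul_comm (|y| ^ 3)] at taylor
    refine taylor.trans (mul_le_mul_of_nonneg_right ?_ (by positivity))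
    linarith [exp_le_three_of_abs_le_one (a := |y|) (by rwa [abs_abs])]
  · calc ‖Complex.exp (y * Complex.I) - 1 - y * Complex.I + (y : ℂ) ^ 2 / 2‖
        ≤ ‖Complex.exp (y * Complex.I)‖ + ‖(1 : ℂ)‖ + ‖(y : ℂ) * Complex.I‖ + ‖(y : ℂ) ^ 2 / 2‖ :=
          (norm_add_le _ _).trans (by grw [norm_sub_le, norm_sub_le])
      _ = 1 + 1 + |y| + |y| ^ 2 / 2 := by
          rw [norm_mul_I, Complex.norm_exp_ofReal_mul_I, norm_one]
          simp
      _ ≤ 4 * |y| ^ 3 := by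
          have : |y| ^ 2 ≤ |y| ^ 3 := pow_le_pow_right₀ hy.le (by norm_num)
          nlinarith

lemma norm_trigSeries_sub_le (hlam : ∀ j, Summable fun m : ℕ => lam m * (m : ℝ) ^ j)
    (hlam_nonneg : ∀ m, 0 ≤ lam m) (θ : ℝ) :
    ‖trigSeries lam θ - seqMoment lam 0 - θ * Complex.I * seqMoment lam 1 +
      (θ : ℂ) ^ 2 / 2 * seqMoment lam 2‖ ≤ 4 * |θ| ^ 3 * seqMoment lam 3 := by
  have moment (j : ℕ) : HasSum (fun m : ℕ => (lam m : ℂ) * (m : ℂ) ^ j) (seqMoment lam j) := by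
    simpa [seqMoment] using Complex.hasSum_ofReal.2 (hlam j).hasSum
  refine HasSum.norm_le_of_bounded
    ((((hasSum_trigSeries (by simpa using hlam 0) θ).sub (moment 0)).sub
      ((moment 1).mul_left (θ * Complex.I))).add ((moment 2).mul_left ((θ : ℂ) ^ 2 / 2)))
    ((hlam 3).hasSum.mul_left (4 * |θ| ^ 3)) fun m => ?_
  have term_eq : (lam m : ℂ) * Complex.exp ((m * θ : ℝ) * Complex.I) - lam m * (m : ℂ) ^ 0 -
      θ * Complex.I * (lam m * (m : ℂ) ^ 1) + (θ : ℂ) ^ 2 / 2 * (lam m * (m : ℂ) ^ 2) =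
        lam m * (Complex.exp ((m * θ : ℝ) * Complex.I) - 1 - (m * θ : ℝ) * Complex.I +
          ((m * θ : ℝ) : ℂ) ^ 2 / 2) := by
    push_cast
    ring
  rw [term_eq, norm_mul, Complex.norm_real, norm_of_nonneg (hlam_nonneg m)]
  calc _ ≤ lam m * (4 * |m * θ| ^ 3) :=
        mul_le_mul_of_nonneg_left (norm_exp_mul_I_sub_le _) (hlam_nonneg m)
    _ = 4 * |θ| ^ 3 * (lam m * m ^ 3) := by rw [abs_mul, Nat.abs_cast]; ring

end SaddleExponent

/-- The scales `√(∑ lam(m) m^j)` of the saddle-point analysis: `j = 0` is the scale of the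
fluctuations of the number of orbits, and `j = 2` the inverse width of the peak in the angle. -/
noncomputable def sqrtMoment (lam : ℕ → ℝ) (j : ℕ) : ℝ := √(seqMoment lam j)

section ExpTaylor

variable {ι : Type*} {l : Filter ι} {b : ι → ℝ} {z : ι → ℂ} {z₀ : ℂ}

lemma norm_exp_div_sub_mul_sq_sub_le {b : ℝ} (hb : 0 < b) (z : ℂ) :
    ‖(Complex.exp (z / b) - 1 - z / b) * (b : ℂ) ^ 2 - z ^ 2 / 2‖ ≤
      ‖z‖ ^ 3 * exp (‖z‖ * b⁻¹) * b⁻¹ := by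
  have b_ne_zero : (b : ℂ) ≠ 0 := Complex.ofReal_ne_zero.2 hb.ne'
  have taylor := Complex.norm_exp_sub_sum_le_norm_mul_exp (z / b) 3
  have norm_z_div : ‖z / b‖ = ‖z‖ * b⁻¹ := by
    rw [norm_div, Complex.norm_real, norm_of_nonneg hb.le, div_eq_mul_inv]
  have remainder_eq : (Complex.exp (z / b) - 1 - z / b) * (b : ℂ) ^ 2 - z ^ 2 / 2 =
      (Complex.exp (z / b) - ∑ m ∈ Finset.range 3, (z / b) ^ m / (m.factorial : ℂ)) *
        (b : ℂ) ^ 2 := by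
    simp only [Finset.sum_range_succ, Finset.sum_range_zero, Nat.factorial]
    push_cast
    field_simp
    ring
  rw [norm_z_div] at taylor
  rw [remainder_eq, norm_mul, norm_pow, Complex.norm_real, norm_of_nonneg hb.le]
  calc _ ≤ (‖z‖ * b⁻¹) ^ 3 * exp (‖z‖ * b⁻¹) * b ^ 2 := by gcongr
    _ = _ := by field_simp

lemma tendsto_ofReal_inv_zero (hb : Tendsto b l atTop) :
    Tendsto (fun i => (b i : ℂ)⁻¹) l (𝓝 0) := by
  simpa [Function.comp_def] using
    (Complex.continuous_ofReal.tendsto 0).comp (tendsto_inv_atTop_zero.comp hb)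

lemma tendsto_exp_div_sub_mul_sq (hb : Tendsto b l atTop) (hz : Tendsto z l (𝓝 z₀)) :
    Tendsto (fun i => (Complex.exp (z i / b i) - 1 - z i / b i) * (b i : ℂ) ^ 2) l
      (𝓝 (z₀ ^ 2 / 2)) := by
  have inv_b : Tendsto (fun i => (b i)⁻¹) l (𝓝 0) := tendsto_inv_atTop_zero.comp hb
  have bound : Tendsto (fun i => ‖z i‖ ^ 3 * exp (‖z i‖ * (b i)⁻¹) * (b i)⁻¹) l (𝓝 0) := by
    simpa using ((hz.norm.pow 3).mul (hz.norm.mul inv_b).rexp).mul inv_b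
  have remainder : Tendsto (fun i => (Complex.exp (z i / b i) - 1 - z i / b i) * (b i : ℂ) ^ 2 -
      z i ^ 2 / 2) l (𝓝 0) := by
    refine squeeze_zero_norm' ?_ bound
    filter_upwards [hb.eventually_gt_atTop 0] with i hi using norm_exp_div_sub_mul_sq_sub_le hi _
  simpa using remainder.add ((hz.pow 2).div_const 2)

lemma tendsto_exp_div_sub_one_mul (hb : Tendsto b l atTop) (hz : Tendsto z l (𝓝 z₀)) :
    Tendsto (fun i => (Complex.exp (z i / b i) - 1) * (b i : ℂ)) l (𝓝 z₀) := by
  have := ((tendsto_exp_div_sub_mul_sq hb hz).mul (tendsto_ofReal_inv_zero hb)).add hz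
  rw [mul_zero, zero_add] at this
  refine this.congr' ?_
  filter_upwards [hb.eventually_gt_atTop 0] with i hi
  have : (b i : ℂ) ≠ 0 := Complex.ofReal_ne_zero.2 hi.ne'
  field_simp
  ring

lemma tendsto_exp_div_one (hb : Tendsto b l atTop) (hz : Tendsto z l (𝓝 z₀)) :
    Tendsto (fun i => Complex.exp (z i / b i)) l (𝓝 1) := by
  simpa [div_eq_mul_inv] using (hz.mul (tendsto_ofReal_inv_zero hb)).cexp

end ExpTaylor

namespace HasPowerGrowth

variable {w : ℕ → ℝ} {k : ℕ} {c : ℝ} (hw : HasPowerGrowth w k c)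

include hw

lemma sqrtMoment_pos (j : ℕ) {t : ℝ} (ht : 0 < t) : 0 < sqrtMoment (expTilt w t) j :=
  sqrt_pos.2 (hw.seqMoment_pos j ht)

lemma sq_sqrtMoment (j : ℕ) {t : ℝ} (ht : 0 < t) :
    sqrtMoment (expTilt w t) j ^ 2 = seqMoment (expTilt w t) j :=
  sq_sqrt (hw.seqMoment_pos j ht).le

lemma tendsto_sqrtMoment_atTop (j : ℕ) :
    Tendsto (fun t => sqrtMoment (expTilt w t) j) (𝓝[>] 0) atTop :=
  tendsto_sqrt_atTop.comp (hw.tendsto_seqMoment_atTop j)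

lemma tendsto_seqMoment_one_div :
    Tendsto (fun t => seqMoment (expTilt w t) 1 /
        (sqrtMoment (expTilt w t) 2 * sqrtMoment (expTilt w t) 0)) (𝓝[>] 0)
      (𝓝 √((k + 1) / (k + 2))) := by
  have := hw.const_pos
  have sq_limit : ((k + 1).factorial * c) ^ 2 / ((k + 0).factorial * c * ((k + 2).factorial * c)) =
      ((k : ℝ) + 1) / (k + 2) := by
    rw [add_zero, Nat.factorial_succ (k + 1), Nat.factorial_succ k]
    push_cast
    field_simp
    ring
  have sq_tendsto := ((hw.tendsto_seqMoment 1).pow 2).div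
    ((hw.tendsto_seqMoment 0).mul (hw.tendsto_seqMoment 2)) (by positivity)
  rw [sq_limit] at sq_tendsto
  refine sq_tendsto.sqrt.congr' ?_
  filter_upwards [self_mem_nhdsWithin] with t (ht : 0 < t)
  have := hw.seqMoment_pos 0 ht
  have := hw.seqMoment_pos 1 ht
  have := hw.seqMoment_pos 2 ht
  have := hw.sqrtMoment_pos 0 ht
  have := hw.sqrtMoment_pos 2 ht
  rw [Pi.div_apply, sqrt_eq_iff_mul_self_eq (by positivity) (by positivity), ← sq, div_pow,
    mul_pow (sqrtMoment _ _), hw.sq_sqrtMoment 0 ht, hw.sq_sqrtMoment 2 ht]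
  field_simp
  ring

lemma tendsto_seqMoment_three_div :
    Tendsto (fun t => seqMoment (expTilt w t) 3 / sqrtMoment (expTilt w t) 2 ^ 3) (𝓝[>] 0)
      (𝓝 0) := by
  have := hw.const_pos
  have pow_tendsto : Tendsto (fun t : ℝ => t ^ (k + 1)) (𝓝[>] 0) (𝓝 0) :=
    tendsto_nhdsWithin_of_tendsto_nhds ((continuous_pow (k + 1)).tendsto' 0 0 (by simp))
  have sq_tendsto := pow_tendsto.mul (((hw.tendsto_seqMoment 3).pow 2).div
    ((hw.tendsto_seqMoment 2).pow 3) (by positivity))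
  have root_tendsto := sq_tendsto.sqrt
  rw [zero_mul, sqrt_zero] at root_tendsto
  refine root_tendsto.congr' ?_
  filter_upwards [self_mem_nhdsWithin] with t (ht : 0 < t)
  have := hw.seqMoment_pos 2 ht
  have := hw.seqMoment_pos 3 ht
  have := hw.sqrtMoment_pos 2 ht
  rw [Pi.div_apply, sqrt_eq_iff_mul_self_eq (by positivity) (by positivity), ← sq, div_pow,
    pow_right_comm, hw.sq_sqrtMoment 2 ht]
  field_simp
  ring

lemma tendsto_trigSeries_sub (u : ℝ) :
    Tendsto (fun t => trigSeries (expTilt w t) (u / sqrtMoment (expTilt w t) 2) -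
        seqMoment (expTilt w t) 0 - (u / sqrtMoment (expTilt w t) 2 : ℝ) * Complex.I *
          seqMoment (expTilt w t) 1) (𝓝[>] 0) (𝓝 (-((u : ℂ) ^ 2 / 2))) := by
  rw [tendsto_iff_norm_sub_tendsto_zero]
  simp only [sub_neg_eq_add]
  refine squeeze_zero' (.of_forall fun _ => norm_nonneg _) ?_
    (by simpa using hw.tendsto_seqMoment_three_div.const_mul (4 * |u| ^ 3))
  filter_upwards [self_mem_nhdsWithin] with t (ht : 0 < t)
  have s_pos := hw.sqrtMoment_pos 2 ht
  have s_ne_zero : (sqrtMoment (expTilt w t) 2 : ℂ) ≠ 0 := Complex.ofReal_ne_zero.2 s_pos.ne'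
  have quadratic_eq : ((u / sqrtMoment (expTilt w t) 2 : ℝ) : ℂ) ^ 2 / 2 *
      seqMoment (expTilt w t) 2 = (u : ℂ) ^ 2 / 2 := by
    rw [← hw.sq_sqrtMoment 2 ht]
    push_cast
    field_simp
  have bound := norm_trigSeries_sub_le (fun j => hw.summable j ht) (hw.expTilt_nonneg t)
    (u / sqrtMoment (expTilt w t) 2)
  rw [quadratic_eq, abs_div, abs_of_pos s_pos, div_pow] at bound
  exact bound.trans_eq (by ring)

lemma tendsto_saddleExponent {ι : Type*} {l : Filter ι} {t : ι → ℝ} (ht : Tendsto t l (𝓝[>] 0))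
    {z : ι → ℂ} {z₀ : ℂ} (hz : Tendsto z l (𝓝 z₀)) (u : ℝ) :
    Tendsto (fun i => saddleExponent (expTilt w (t i)) (z i / sqrtMoment (expTilt w (t i)) 0)
        (u / sqrtMoment (expTilt w (t i)) 2)) l
      (𝓝 (-((u : ℂ) ^ 2 / 2) + z₀ * (u * Complex.I * √((k + 1) / (k + 2))) + z₀ ^ 2 / 2)) := by
  have hb := (hw.tendsto_sqrtMoment_atTop 0).comp ht
  have correlation : Tendsto (fun i => ((seqMoment (expTilt w (t i)) 1 /
      (sqrtMoment (expTilt w (t i)) 2 * sqrtMoment (expTilt w (t i)) 0) : ℝ) : ℂ)) l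
        (𝓝 √((k + 1) / (k + 2))) :=
    (Complex.continuous_ofReal.tendsto _).comp (hw.tendsto_seqMoment_one_div.comp ht)
  have sum_tendsto := (((tendsto_exp_div_one hb hz).mul ((hw.tendsto_trigSeries_sub u).comp ht)).add
    ((tendsto_exp_div_sub_one_mul hb hz).mul (correlation.const_mul (u * Complex.I)))).add
      (tendsto_exp_div_sub_mul_sq hb hz)
  rw [one_mul] at sum_tendsto
  refine sum_tendsto.congr' ?_
  filter_upwards [ht.eventually self_mem_nhdsWithin] with i (hi : 0 < t i)
  have b_ne_zero : (sqrtMoment (expTilt w (t i)) 0 : ℂ) ≠ 0 :=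
    Complex.ofReal_ne_zero.2 (hw.sqrtMoment_pos 0 hi).ne'
  have s_ne_zero : (sqrtMoment (expTilt w (t i)) 2 : ℂ) ≠ 0 :=
    Complex.ofReal_ne_zero.2 (hw.sqrtMoment_pos 2 hi).ne'
  simp only [Function.comp_apply, saddleExponent, ← hw.sq_sqrtMoment 0 hi]
  push_cast
  field_simp
  ring

end HasPowerGrowth

lemma exp_neg_mul_le_mul_inv {a y : ℝ} (ha : 0 < a) (hy : 0 ≤ y) :
    exp (-(a * y)) ≤ (1 + a⁻¹) * (1 + y)⁻¹ := by
  rw [exp_neg, ← div_eq_mul_inv, le_div_iff₀ (by positivity), inv_mul_le_iff₀ (exp_pos _)]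
  calc 1 + y ≤ (a * y + 1) * (1 + a⁻¹) := by
        have : (a * y + 1) * (1 + a⁻¹) = 1 + y + (a * y + a⁻¹) := by field_simp; ring
        rw [this]
        linarith [show 0 ≤ a * y + a⁻¹ by positivity]
    _ ≤ exp (a * y) * (1 + a⁻¹) := by gcongr; exact add_one_le_exp _

lemma exp_neg_div_le_mul_pow {a t : ℝ} (ha : 0 < a) (ht : 0 < t) (j : ℕ) :
    exp (-(a / t)) ≤ j.factorial / a ^ j * t ^ j := by
  have le_exp := pow_div_factorial_le_exp (a / t) (by positivity) j
  calc exp (-(a / t)) ≤ ((a / t) ^ j / j.factorial)⁻¹ := by rw [exp_neg]; gcongr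
    _ = j.factorial / a ^ j * t ^ j := by rw [div_pow]; field_simp

lemma tendsto_intervalIntegral_of_dominated {ι : Type*} {l : Filter ι} [l.IsCountablyGenerated]
    {F : ι → ℝ → ℂ} {f : ℝ → ℂ} {a : ι → ℝ} {bound : ℝ → ℝ} (ha : Tendsto a l atTop)
    (hF : ∀ᶠ i in l, Continuous (F i)) (bound_integrable : Integrable bound)
    (bound_nonneg : ∀ u, 0 ≤ bound u) (h_bound : ∀ᶠ i in l, ∀ u, |u| ≤ a i → ‖F i u‖ ≤ bound u)
    (h_lim : ∀ u, Tendsto (fun i => F i u) l (𝓝 (f u))) :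
    Tendsto (fun i => ∫ u in (-a i)..(a i), F i u) l (𝓝 (∫ u, f u)) := by
  have indicator_tendsto := tendsto_integral_filter_of_dominated_convergence (μ := volume)
    (F := fun i => (Set.Ioc (-a i) (a i)).indicator (F i)) (l := l) bound
    (hF.mono fun i hi => hi.aestronglyMeasurable.indicator measurableSet_Ioc) ?_ bound_integrable
    (.of_forall fun u => (h_lim u).congr' ?_)
  · refine indicator_tendsto.congr' ?_
    filter_upwards [ha.eventually_ge_atTop 0] with i hi
    rw [intervalIntegral.integral_of_le (neg_le_self hi), integral_indicator measurableSet_Ioc]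
  · filter_upwards [h_bound] with i hi
    refine .of_forall fun u => ?_
    by_cases hu : u ∈ Set.Ioc (-a i) (a i)
    · rw [Set.indicator_of_mem hu]
      exact hi u (abs_le.2 ⟨hu.1.le, hu.2⟩)
    · rw [Set.indicator_of_notMem hu, norm_zero]
      exact bound_nonneg u
  · filter_upwards [ha.eventually_gt_atTop |u|] with i hi
    have mem_Ioc : u ∈ Set.Ioc (-a i) (a i) := ⟨(abs_lt.1 hi).1, (abs_lt.1 hi).2.le⟩
    rw [Set.indicator_of_mem mem_Ioc]

/-- The integral in Cauchy's formula, with the angle measured in units of the width of the peak and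
`z` in units of the fluctuations. -/
noncomputable def saddleIntegral (lam : ℕ → ℝ) (z : ℂ) : ℂ :=
  ∫ u in (-(π * sqrtMoment lam 2))..(π * sqrtMoment lam 2),
    Complex.exp (saddleExponent lam (z / sqrtMoment lam 0) (u / sqrtMoment lam 2))

lemma integral_cexp_gaussian_shift (k : ℕ) (z : ℂ) :
    ∫ u : ℝ, Complex.exp (-((u : ℂ) ^ 2 / 2) + z * (u * Complex.I * √((k + 1) / (k + 2))) +
        z ^ 2 / 2) =
      ((2 * π : ℝ) : ℂ) ^ (1 / 2 : ℂ) * Complex.exp (z ^ 2 / (2 * (k + 2))) := by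
  have ratio_sq : (√((k + 1) / (k + 2)) : ℂ) ^ 2 = ((k : ℂ) + 1) / (k + 2) := by
    rw [← Complex.ofReal_pow, sq_sqrt (by positivity)]
    push_cast
    rfl
  have base_eq : (π : ℂ) / -(-1 / 2) = ((2 * π : ℝ) : ℂ) := by push_cast; ring
  have exponent_eq : z ^ 2 / 2 - (z * Complex.I * √((k + 1) / (k + 2))) ^ 2 / (4 * (-1 / 2)) =
      z ^ 2 / (2 * (k + 2)) := by
    have : (k : ℂ) + 2 ≠ 0 := mod_cast (k + 1).succ_ne_zero
    rw [mul_pow, mul_pow, Complex.I_sq, ratio_sq]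
    field_simp
    ring
  rw [← base_eq, ← exponent_eq, ← integral_cexp_quadratic (by norm_num)]
  refine integral_congr_ae (.of_forall fun u => ?_)
  ring_nf

namespace HasPowerGrowth

variable {w : ℕ → ℝ} {k : ℕ} {c : ℝ} (hw : HasPowerGrowth w k c)

include hw

lemma exists_eventually_pow_mul_seqMoment_two_le :
    ∃ Q : ℝ, 0 < Q ∧ ∀ᶠ t in 𝓝[>] (0 : ℝ), t ^ (k + 3) * seqMoment (expTilt w t) 2 ≤ Q := by
  have := hw.const_pos
  exact ⟨(k + 2).factorial * c + 1, by positivity,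
    (hw.tendsto_seqMoment 2).eventually_le_const (lt_add_one _)⟩

lemma eventually_exp_neg_damping_le_near :
    ∃ C : ℝ, 0 < C ∧ ∀ᶠ t in 𝓝[>] (0 : ℝ), ∀ u : ℝ, |u / sqrtMoment (expTilt w t) 2| ≤ t →
      exp (-(damping (expTilt w t) (u / sqrtMoment (expTilt w t) 2) / 6)) ≤
        C * (1 + u ^ 2)⁻¹ := by
  obtain ⟨b, hb, le_damping⟩ := hw.exists_mul_sq_div_pow_le_damping
  obtain ⟨Q, hQ, le_Q⟩ := hw.exists_eventually_pow_mul_seqMoment_two_le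
  refine ⟨1 + (b / Q / 6)⁻¹, by positivity, ?_⟩
  filter_upwards [le_Q, Ioc_mem_nhdsGT (one_half_pos (α := ℝ))] with t ht_Q ⟨ht, ht'⟩ u hu
  have moment_pos := hw.seqMoment_pos 2 ht
  refine le_trans (exp_le_exp.2 (neg_le_neg ?_))
    (exp_neg_mul_le_mul_inv (by positivity) (sq_nonneg u))
  calc b / Q / 6 * u ^ 2 = b * u ^ 2 / Q / 6 := by ring
    _ ≤ b * u ^ 2 / (t ^ (k + 3) * seqMoment (expTilt w t) 2) / 6 := by gcongr
    _ = b * (u / sqrtMoment (expTilt w t) 2) ^ 2 / t ^ (k + 3) / 6 := by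
        rw [div_pow u, hw.sq_sqrtMoment 2 ht]
        field_simp
    _ ≤ _ := by gcongr; exact le_damping ht ht' hu

lemma eventually_exp_neg_damping_le_far :
    ∃ C : ℝ, ∀ᶠ t in 𝓝[>] (0 : ℝ), ∀ u : ℝ, t ≤ |u / sqrtMoment (expTilt w t) 2| →
      |u| ≤ π * sqrtMoment (expTilt w t) 2 →
      exp (-(damping (expTilt w t) (u / sqrtMoment (expTilt w t) 2) / 6)) ≤
        C * (1 + u ^ 2)⁻¹ := by
  obtain ⟨b, hb, le_damping⟩ := hw.exists_div_le_damping
  obtain ⟨Q, -, le_Q⟩ := hw.exists_eventually_pow_mul_seqMoment_two_le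
  refine ⟨(k + 3).factorial / (b / 6) ^ (k + 3) * (Q * (1 + π ^ 2)), ?_⟩
  filter_upwards [le_Q, Ioc_mem_nhdsGT (one_half_pos (α := ℝ)),
    (hw.tendsto_seqMoment_atTop 2).eventually_ge_atTop 1] with t ht_Q ⟨ht, ht'⟩ one_le u hu hu'
  have s_pos := hw.sqrtMoment_pos 2 ht
  have angle_le : |u / sqrtMoment (expTilt w t) 2| ≤ π := by
    rwa [abs_div, abs_of_pos s_pos, div_le_iff₀ s_pos]
  have u_sq_le : u ^ 2 ≤ π ^ 2 * seqMoment (expTilt w t) 2 := by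
    rw [← hw.sq_sqrtMoment 2 ht, ← mul_pow, ← sq_abs u]
    gcongr
  have pow_le : t ^ (k + 3) ≤ Q * (1 + π ^ 2) * (1 + u ^ 2)⁻¹ := by
    rw [← div_eq_mul_inv, le_div_iff₀ (by positivity)]
    calc t ^ (k + 3) * (1 + u ^ 2)
        ≤ t ^ (k + 3) * (seqMoment (expTilt w t) 2 * (1 + π ^ 2)) := by gcongr; linarith
      _ = t ^ (k + 3) * seqMoment (expTilt w t) 2 * (1 + π ^ 2) := by ring
      _ ≤ Q * (1 + π ^ 2) := by gcongr
  calc _ ≤ exp (-(b / 6 / t)) := by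
        rw [div_right_comm]
        gcongr
        exact le_damping ht ht' hu angle_le
    _ ≤ (k + 3).factorial / (b / 6) ^ (k + 3) * t ^ (k + 3) :=
        exp_neg_div_le_mul_pow (by positivity) ht _
    _ ≤ _ := by rw [mul_assoc _ (Q * _)]; gcongr

lemma eventually_norm_exp_saddleExponent_le (R : ℝ) :
    ∃ C : ℝ, 0 < C ∧ ∀ᶠ t in 𝓝[>] (0 : ℝ), ∀ z : ℂ, ‖z‖ ≤ R → ∀ u : ℝ,
      |u| ≤ π * sqrtMoment (expTilt w t) 2 →
      ‖Complex.exp (saddleExponent (expTilt w t) (z / sqrtMoment (expTilt w t) 0)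
        (u / sqrtMoment (expTilt w t) 2))‖ ≤ C * (1 + u ^ 2)⁻¹ := by
  obtain ⟨C₁, hC₁, near⟩ := hw.eventually_exp_neg_damping_le_near
  obtain ⟨C₂, far⟩ := hw.eventually_exp_neg_damping_le_far
  refine ⟨exp (3 * R ^ 2) * max C₁ C₂, by positivity, ?_⟩
  filter_upwards [near, far, self_mem_nhdsWithin,
    (hw.tendsto_sqrtMoment_atTop 0).eventually_ge_atTop R] with t ht_near ht_far (ht : 0 < t)
    R_le z hz u hu
  have b_pos := hw.sqrtMoment_pos 0 ht
  have norm_div_eq : ‖z / sqrtMoment (expTilt w t) 0‖ = ‖z‖ / sqrtMoment (expTilt w t) 0 := by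
    rw [norm_div, Complex.norm_real, norm_of_nonneg b_pos.le]
  have re_le := saddleExponent_re_le (hw.summable_expTilt ht) (hw.expTilt_nonneg t)
    (z := z / sqrtMoment (expTilt w t) 0) (by rw [norm_div_eq, div_le_one b_pos]; linarith)
    (u / sqrtMoment (expTilt w t) 2)
  rw [norm_div_eq, ← hw.sq_sqrtMoment 0 ht, div_pow, div_mul_cancel₀ _ (by positivity)] at re_le
  have damping_le : exp (-(damping (expTilt w t) (u / sqrtMoment (expTilt w t) 2) / 6)) ≤
      max C₁ C₂ * (1 + u ^ 2)⁻¹ := by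
    rcases le_total |u / sqrtMoment (expTilt w t) 2| t with hut | hut
    · exact (ht_near u hut).trans (by gcongr; exact le_max_left _ _)
    · exact (ht_far u hut hu).trans (by gcongr; exact le_max_right _ _)
  rw [Complex.norm_exp]
  calc _ ≤ exp (-(damping (expTilt w t) (u / sqrtMoment (expTilt w t) 2) / 6) + 3 * R ^ 2) :=
        exp_le_exp.2 (re_le.trans (by gcongr))
    _ = exp (3 * R ^ 2) *
          exp (-(damping (expTilt w t) (u / sqrtMoment (expTilt w t) 2) / 6)) := by
        rw [exp_add, mul_comm]
    _ ≤ exp (3 * R ^ 2) * (max C₁ C₂ * (1 + u ^ 2)⁻¹) := by gcongr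
    _ = _ := by ring

lemma saddleIntegral_eq {n : ℕ} {t : ℝ} (ht : 0 < t) (hn : seqMoment (expTilt w t) 1 = n)
    {z : ℂ} {h : ℕ → ℂ}
    (hh : IsExpCoeff (fun m => Complex.exp (z / sqrtMoment (expTilt w t) 0) * w m) h) :
    saddleIntegral (expTilt w t) z =
      2 * π * sqrtMoment (expTilt w t) 2 *
        Complex.exp (-(n * t) - seqMoment (expTilt w t) 0) *
        (Complex.exp (-(z * sqrtMoment (expTilt w t) 0)) * h n) := by
  have s_ne_zero := (hw.sqrtMoment_pos 2 ht).ne'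
  have b_ne_zero : (sqrtMoment (expTilt w t) 0 : ℂ) ≠ 0 :=
    Complex.ofReal_ne_zero.2 (hw.sqrtMoment_pos 0 ht).ne'
  set y := z / sqrtMoment (expTilt w t) 0 with hy
  have linear_eq : (seqMoment (expTilt w t) 0 : ℂ) * y = z * sqrtMoment (expTilt w t) 0 := by
    rw [hy, ← hw.sq_sqrtMoment 0 ht]
    push_cast
    field_simp
  have angle_integral : ∫ θ in (-π)..π, Complex.exp (saddleExponent (expTilt w t) y θ) =
      Complex.exp (-(seqMoment (expTilt w t) 0 + z * sqrtMoment (expTilt w t) 0)) *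
        (2 * π * (Complex.exp (-(n * t)) * h n)) := by
    rw [hw.exp_neg_mul_coeff_eq_integral hh ht n, ← mul_assoc (2 * π : ℂ),
      mul_one_div_cancel (by simp [pi_ne_zero]), one_mul, ← intervalIntegral.integral_const_mul]
    refine intervalIntegral.integral_congr fun θ _ => ?_
    simp only [← Complex.exp_add, saddleExponent, hn]
    congr 1
    push_cast
    linear_combination -linear_eq
  rw [saddleIntegral, intervalIntegral.integral_comp_div
    (fun θ : ℝ => Complex.exp (saddleExponent (expTilt w t) y θ)) s_ne_zero, neg_div,
    mul_div_cancel_right₀ _ s_ne_zero, Complex.real_smul, angle_integral, sub_eq_add_neg, neg_add,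
    Complex.exp_add, Complex.exp_add]
  ring

variable {ι : Type*} {l : Filter ι} [l.IsCountablyGenerated] {t : ι → ℝ} {z : ι → ℂ} {z₀ : ℂ}

lemma tendsto_saddleIntegral (ht : Tendsto t l (𝓝[>] 0)) (hz : Tendsto z l (𝓝 z₀)) :
    Tendsto (fun i => saddleIntegral (expTilt w (t i)) (z i)) l
      (𝓝 (((2 * π : ℝ) : ℂ) ^ (1 / 2 : ℂ) * Complex.exp (z₀ ^ 2 / (2 * (k + 2))))) := by
  obtain ⟨C, hC, dominated⟩ := hw.eventually_norm_exp_saddleExponent_le (‖z₀‖ + 1)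
  rw [← integral_cexp_gaussian_shift k z₀]
  refine tendsto_intervalIntegral_of_dominated
    (((hw.tendsto_sqrtMoment_atTop 2).comp ht).const_mul_atTop pi_pos) ?_
    (integrable_inv_one_add_sq.const_mul C) (fun u => by positivity) ?_
    fun u => (hw.tendsto_saddleExponent ht hz u).cexp
  · filter_upwards [ht.eventually self_mem_nhdsWithin] with i (hi : 0 < t i)
    have := continuous_saddleExponent (hw.summable_expTilt hi)
      (z i / sqrtMoment (expTilt w (t i)) 0)
    fun_prop
  · filter_upwards [ht.eventually dominated,
      hz.norm.eventually_le_const (lt_add_one ‖z₀‖)] with i hi hzi u hu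
    exact hi (z i) hzi u hu

/-- Dividing by the integral at `z = 0` cancels the unknown size of the coefficients. -/
lemma tendsto_exp_mul_coeff_div {h : ℂ → ℕ → ℂ}
    (hh : ∀ y, IsExpCoeff (fun m => Complex.exp y * w m) (h y)) {N : ι → ℕ}
    (ht : Tendsto t l (𝓝[>] 0)) (hN : ∀ᶠ i in l, seqMoment (expTilt w (t i)) 1 = N i)
    (hz : Tendsto z l (𝓝 z₀)) :
    Tendsto (fun i => Complex.exp (-(z i * sqrtMoment (expTilt w (t i)) 0)) *
        h (z i / sqrtMoment (expTilt w (t i)) 0) (N i) / h 0 (N i)) l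
      (𝓝 (Complex.exp (z₀ ^ 2 / (2 * (k + 2))))) := by
  have root_ne_zero : ((2 * π : ℝ) : ℂ) ^ (1 / 2 : ℂ) ≠ 0 := by
    simp [Complex.cpow_eq_zero_iff, pi_ne_zero]
  have quotient_tendsto := (hw.tendsto_saddleIntegral ht hz).div
    (hw.tendsto_saddleIntegral ht (tendsto_const_nhds (x := 0)))
    (mul_ne_zero root_ne_zero (Complex.exp_ne_zero _))
  rw [mul_div_mul_left _ _ root_ne_zero, zero_pow two_ne_zero, zero_div, Complex.exp_zero,
    div_one] at quotient_tendsto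
  refine quotient_tendsto.congr' ?_
  filter_upwards [ht.eventually self_mem_nhdsWithin, hN] with i (hi : 0 < t i) hNi
  have prefactor_ne_zero : (2 * π * sqrtMoment (expTilt w (t i)) 2 *
      Complex.exp (-(N i * t i) - seqMoment (expTilt w (t i)) 0) : ℂ) ≠ 0 := by
    simp [pi_ne_zero, (hw.sqrtMoment_pos 2 hi).ne']
  rw [Pi.div_apply, hw.saddleIntegral_eq hi hNi (hh _),
    hw.saddleIntegral_eq (z := 0) hi hNi (by simpa using hh 0),
    mul_div_mul_left _ _ prefactor_ne_zero, zero_mul, neg_zero, Complex.exp_zero, one_mul]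

end HasPowerGrowth

section Weighted

variable {α : Type*} (s : Finset α) (p X : α → ℝ)

/-- The expectation of `X` under the weights `p` on the finite set `s`, meant for weights of total
mass `1`. -/
noncomputable def weightedMean : ℝ := ∑ a ∈ s, p a * X a

/-- The variance of `X` under the weights `p` on `s`. -/
noncomputable def weightedVar : ℝ := weightedMean s p fun a => (X a - weightedMean s p X) ^ 2

/-- `X` recentred and rescaled to mean `0` and variance `1` (identically `0` when `X` has
variance `0`). -/
noncomputable def standardized (a : α) : ℝ := (X a - weightedMean s p X) / √(weightedVar s p X)

/-- The moment generating function of `X` under the weights `p` on `s`, at complex arguments. -/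
noncomputable def weightedMGF (z : ℂ) : ℂ := ∑ a ∈ s, p a * Complex.exp (z * X a)

variable {s p}

lemma weightedMean_add_mul (hp : ∑ a ∈ s, p a = 1) (b c : ℝ) :
    weightedMean s p (fun a => c + b * X a) = c + b * weightedMean s p X := by
  simp only [weightedMean, mul_add, Finset.sum_add_distrib, Finset.mul_sum, ← Finset.sum_mul, hp,
    one_mul, mul_left_comm]

lemma weightedVar_add_mul (hp : ∑ a ∈ s, p a = 1) (b c : ℝ) :
    weightedVar s p (fun a => c + b * X a) = b ^ 2 * weightedVar s p X := by
  simp only [weightedVar, weightedMean_add_mul X hp, add_sub_add_left_eq_sub, ← mul_sub, mul_pow]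
  simp only [weightedMean, Finset.mul_sum, mul_left_comm]

lemma standardized_add_mul (hp : ∑ a ∈ s, p a = 1) {b : ℝ} (hb : 0 < b) (c : ℝ) :
    standardized s p (fun a => c + b * X a) = standardized s p X := by
  funext a
  rw [standardized, weightedMean_add_mul X hp, weightedVar_add_mul X hp,
    sqrt_mul (sq_nonneg b), sqrt_sq hb.le, add_sub_add_left_eq_sub, ← mul_sub,
    mul_div_mul_left _ _ hb.ne', standardized]

lemma weightedVar_eq_sub (hp : ∑ a ∈ s, p a = 1) :
    weightedVar s p X = weightedMean s p (X ^ 2) - weightedMean s p X ^ 2 := by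
  rw [weightedVar]
  set m := weightedMean s p X with hm
  calc weightedMean s p (fun a => (X a - m) ^ 2)
      = ∑ a ∈ s, (p a * X a ^ 2 - 2 * m * (p a * X a) + m ^ 2 * p a) :=
        Finset.sum_congr rfl fun a _ => by ring
    _ = weightedMean s p (X ^ 2) - 2 * m * m + m ^ 2 * 1 := by
        rw [Finset.sum_add_distrib, Finset.sum_sub_distrib, ← Finset.mul_sum, ← Finset.mul_sum, hp,
          hm]
        rfl
    _ = weightedMean s p (X ^ 2) - m ^ 2 := by ring

variable (s p)

lemma iteratedDeriv_weightedMGF (j : ℕ) :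
    iteratedDeriv j (weightedMGF s p X) =
      fun z => ∑ a ∈ s, p a * X a ^ j * Complex.exp (z * X a) := by
  induction j with
  | zero => simp only [iteratedDeriv_zero, pow_zero, mul_one]; rfl
  | succ j ih =>
    rw [iteratedDeriv_succ, ih]
    funext z
    refine HasDerivAt.deriv (HasDerivAt.fun_sum fun a _ => ?_)
    convert! (((hasDerivAt_id z).mul_const (X a : ℂ)).cexp).const_mul ((p a : ℂ) * X a ^ j) using 1
    simp only [id]
    ring

lemma iteratedDeriv_weightedMGF_zero (j : ℕ) :
    iteratedDeriv j (weightedMGF s p X) 0 = weightedMean s p (X ^ j) := by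
  simp [iteratedDeriv_weightedMGF, weightedMean]

lemma differentiable_iteratedDeriv_weightedMGF (j : ℕ) :
    Differentiable ℂ (iteratedDeriv j (weightedMGF s p X)) := by
  rw [iteratedDeriv_weightedMGF]
  fun_prop

lemma weightedMGF_standardized_mul_I (τ : ℝ) :
    weightedMGF s p (standardized s p X) (τ * Complex.I) =
      Complex.exp (-((τ / √(weightedVar s p X) * weightedMean s p X : ℝ) * Complex.I)) *
        weightedMGF s p X ((τ / √(weightedVar s p X) : ℝ) * Complex.I) := by
  rw [weightedMGF, weightedMGF, Finset.mul_sum]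
  refine Finset.sum_congr rfl fun a _ => ?_
  rw [mul_left_comm, ← Complex.exp_add, standardized]
  congr 2
  push_cast
  ring

end Weighted

section LocallyUniform

variable {ι : Type*} {l : Filter ι}

lemma tendstoLocallyUniformly_of_tendsto_prod {E F : Type*} [TopologicalSpace E] [UniformSpace F]
    {G : ι → E → F} {g : E → F} (hg : Continuous g)
    (h : ∀ z, Tendsto (fun q : ι × E => G q.1 q.2) (l ×ˢ 𝓝 z) (𝓝 (g z))) :
    TendstoLocallyUniformly G g l := by
  refine tendstoLocallyUniformly_iff_forall_tendsto.2 fun z => ?_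
  exact (((hg.tendsto z).comp tendsto_snd).prodMk_nhds (h z)).mono_right (nhds_le_uniformity _)

lemma tendsto_iteratedDeriv_of_tendstoLocallyUniformly {G : ι → ℂ → ℂ} {g : ℂ → ℂ}
    (hG : ∀ i j, Differentiable ℂ (iteratedDeriv j (G i))) (h : TendstoLocallyUniformly G g l)
    (j : ℕ) : TendstoLocallyUniformly (fun i => iteratedDeriv j (G i)) (iteratedDeriv j g) l := by
  induction j with
  | zero => simpa only [iteratedDeriv_zero] using h
  | succ j ih =>
    simp only [iteratedDeriv_succ]
    rw [← tendstoLocallyUniformlyOn_univ] at ih ⊢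
    exact ih.deriv (.of_forall fun i => (hG i j).differentiableOn) isOpen_univ

end LocallyUniform

section GaussianMGF

lemma deriv_cexp_mul_sq_div_two (v : ℂ) :
    deriv (fun z : ℂ => Complex.exp (v * z ^ 2 / 2)) =
      fun z => v * z * Complex.exp (v * z ^ 2 / 2) := by
  funext z
  refine HasDerivAt.deriv ?_
  convert! (((hasDerivAt_pow 2 z).const_mul v).div_const 2).cexp using 1
  push_cast
  ring

lemma iteratedDeriv_one_cexp_mul_sq_div_two_zero (v : ℂ) :
    iteratedDeriv 1 (fun z : ℂ => Complex.exp (v * z ^ 2 / 2)) 0 = 0 := by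
  simp [iteratedDeriv_one, deriv_cexp_mul_sq_div_two]

lemma iteratedDeriv_two_cexp_mul_sq_div_two_zero (v : ℂ) :
    iteratedDeriv 2 (fun z : ℂ => Complex.exp (v * z ^ 2 / 2)) 0 = v := by
  rw [iteratedDeriv_succ, iteratedDeriv_one, deriv_cexp_mul_sq_div_two]
  refine HasDerivAt.deriv ?_
  convert! ((hasDerivAt_id (0 : ℂ)).const_mul v).mul
    (((hasDerivAt_pow 2 (0 : ℂ)).const_mul v).div_const 2).cexp using 1
  simp

end GaussianMGF

section Levy

variable {α : Type*} {s : Finset α} {p X : α → ℝ}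

/-- The law of `X` under the weights `p` on the finite set `s`. -/
noncomputable def weightedLaw (s : Finset α) (p X : α → ℝ) : Measure ℝ :=
  ∑ a ∈ s, ENNReal.ofReal (p a) • Measure.dirac (X a)

lemma isProbabilityMeasure_weightedLaw (hp : ∀ a ∈ s, 0 ≤ p a) (hp_sum : ∑ a ∈ s, p a = 1) :
    IsProbabilityMeasure (weightedLaw s p X) := by
  constructor
  simp only [weightedLaw, Measure.finsetSum_apply, Measure.smul_apply, measure_univ, smul_eq_mul,
    mul_one]
  rw [← ENNReal.ofReal_sum_of_nonneg hp, hp_sum, ENNReal.ofReal_one]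

lemma integral_weightedLaw {E : Type*} [NormedAddCommGroup E] [NormedSpace ℝ E] [CompleteSpace E]
    (hp : ∀ a ∈ s, 0 ≤ p a) (g : ℝ → E) :
    ∫ y, g y ∂weightedLaw s p X = ∑ a ∈ s, p a • g (X a) := by
  rw [weightedLaw, integral_finsetSum_measure fun a _ =>
    (integrable_dirac (by simp)).smul_measure ENNReal.ofReal_ne_top]
  refine Finset.sum_congr rfl fun a ha => ?_
  rw [integral_smul_measure, integral_dirac, ENNReal.toReal_ofReal (hp a ha)]

lemma charFun_weightedLaw (hp : ∀ a ∈ s, 0 ≤ p a) (τ : ℝ) :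
    charFun (weightedLaw s p X) τ = weightedMGF s p X (τ * Complex.I) := by
  rw [charFun_apply_real, integral_weightedLaw hp, weightedMGF]
  refine Finset.sum_congr rfl fun a _ => ?_
  rw [Complex.real_smul, mul_right_comm]

lemma integral_gaussianReal_zero_one (f : ℝ → ℝ) :
    ∫ y, f y ∂ProbabilityTheory.gaussianReal 0 1 =
      1 / √(2 * π) * ∫ s, f s * exp (-s ^ 2 / 2) := by
  rw [ProbabilityTheory.integral_gaussianReal_eq_integral_smul one_ne_zero, ← integral_const_mul]
  refine integral_congr_ae (.of_forall fun s => ?_)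
  simp only [ProbabilityTheory.gaussianPDFReal, sub_zero, NNReal.coe_one, mul_one, smul_eq_mul,
    one_div]
  ring

end Levy

section StandardizedLimit

variable {α : Type*} {s : ℕ → Finset α} {p X : ℕ → α → ℝ}

lemma tendsto_weightedMean_gaussian (hp : ∀ n, ∀ a ∈ s n, 0 ≤ p n a)
    (hp_sum : ∀ n, ∑ a ∈ s n, p n a = 1)
    (h : ∀ τ : ℝ, Tendsto (fun n => weightedMGF (s n) (p n) (X n) (τ * Complex.I)) atTop
      (𝓝 (Complex.exp (-(τ : ℂ) ^ 2 / 2))))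
    {f : ℝ → ℝ} (hf : Continuous f) (hbdd : ∃ M : ℝ, ∀ y, |f y| ≤ M) :
    Tendsto (fun n => weightedMean (s n) (p n) fun a => f (X n a)) atTop
      (𝓝 (1 / √(2 * π) * ∫ y, f y * exp (-y ^ 2 / 2))) := by
  let law (n : ℕ) : ProbabilityMeasure ℝ :=
    ⟨weightedLaw (s n) (p n) (X n), isProbabilityMeasure_weightedLaw (hp n) (hp_sum n)⟩
  let gaussian : ProbabilityMeasure ℝ := ⟨ProbabilityTheory.gaussianReal 0 1, inferInstance⟩
  have law_tendsto : Tendsto law atTop (𝓝 gaussian) := by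
    refine ProbabilityMeasure.tendsto_of_tendsto_charFun fun τ => ?_
    simpa [law, gaussian, charFun_weightedLaw (hp _), ProbabilityTheory.charFun_gaussianReal,
      neg_div] using h τ
  obtain ⟨M, hM⟩ := hbdd
  have integral_tendsto := ProbabilityMeasure.tendsto_iff_forall_integral_tendsto.1 law_tendsto
    (BoundedContinuousFunction.ofNormedAddCommGroup f hf M hM)
  simpa only [BoundedContinuousFunction.coe_ofNormedAddCommGroup, law, gaussian,
    ProbabilityMeasure.coe_mk, integral_weightedLaw (hp _), integral_gaussianReal_zero_one,
    smul_eq_mul, weightedMean] using integral_tendsto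

lemma tendsto_weightedMean_pow {g : ℂ → ℂ} (hg : Continuous g)
    (h : ∀ z, Tendsto (fun q : ℕ × ℂ => weightedMGF (s q.1) (p q.1) (X q.1) q.2) (atTop ×ˢ 𝓝 z)
      (𝓝 (g z))) (j : ℕ) :
    Tendsto (fun n => weightedMean (s n) (p n) (X n ^ j)) atTop
      (𝓝 (iteratedDeriv j g 0).re) := by
  have tendsto_deriv := tendsto_iteratedDeriv_of_tendstoLocallyUniformly
    (fun n => differentiable_iteratedDeriv_weightedMGF (s n) (p n) (X n))
    (tendstoLocallyUniformly_of_tendsto_prod hg h) j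
  have tendsto_deriv_zero := (tendstoLocallyUniformlyOn_univ.2 tendsto_deriv).tendsto_at
    (Set.mem_univ 0)
  simp only [iteratedDeriv_weightedMGF_zero] at tendsto_deriv_zero
  exact (Complex.continuous_re.tendsto _).comp tendsto_deriv_zero

variable {v : ℝ}
  (h : ∀ z : ℂ, Tendsto (fun q : ℕ × ℂ => weightedMGF (s q.1) (p q.1) (X q.1) q.2) (atTop ×ˢ 𝓝 z)
    (𝓝 (Complex.exp (v * z ^ 2 / 2))))

include h

lemma tendsto_weightedMean_zero :
    Tendsto (fun n => weightedMean (s n) (p n) (X n)) atTop (𝓝 0) := by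
  simpa [iteratedDeriv_one_cexp_mul_sq_div_two_zero] using
    tendsto_weightedMean_pow (by fun_prop) h 1

lemma tendsto_weightedVar (hp_sum : ∀ n, ∑ a ∈ s n, p n a = 1) :
    Tendsto (fun n => weightedVar (s n) (p n) (X n)) atTop (𝓝 v) := by
  have sq_tendsto := tendsto_weightedMean_pow (by fun_prop) h 2
  rw [iteratedDeriv_two_cexp_mul_sq_div_two_zero, Complex.ofReal_re] at sq_tendsto
  simp only [weightedVar_eq_sub _ (hp_sum _)]
  simpa using sq_tendsto.sub ((tendsto_weightedMean_zero h).pow 2)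

lemma tendsto_weightedMGF_standardized (hp_sum : ∀ n, ∑ a ∈ s n, p n a = 1) (hv : 0 < v)
    (τ : ℝ) :
    Tendsto (fun n => weightedMGF (s n) (p n) (standardized (s n) (p n) (X n)) (τ * Complex.I))
      atTop (𝓝 (Complex.exp (-(τ : ℂ) ^ 2 / 2))) := by
  have ratio_tendsto : Tendsto (fun n => τ / √(weightedVar (s n) (p n) (X n))) atTop
      (𝓝 (τ / √v)) :=
    tendsto_const_nhds.div (tendsto_weightedVar h hp_sum).sqrt (sqrt_pos.2 hv).ne'
  have phase_tendsto : Tendsto (fun n => Complex.exp (-((τ / √(weightedVar (s n) (p n) (X n)) *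
      weightedMean (s n) (p n) (X n) : ℝ) * Complex.I))) atTop (𝓝 1) := by
    have exponent_tendsto := (Complex.continuous_ofReal.tendsto _).comp
      (ratio_tendsto.mul (tendsto_weightedMean_zero h))
    simpa [Function.comp_def] using (exponent_tendsto.mul_const Complex.I).neg.cexp
  have mgf_tendsto := (h _).comp (tendsto_id.prodMk
    (((Complex.continuous_ofReal.tendsto _).comp ratio_tendsto).mul_const Complex.I))
  have limit_eq : 1 * Complex.exp (v * ((τ / √v : ℝ) * Complex.I) ^ 2 / 2) =
      Complex.exp (-(τ : ℂ) ^ 2 / 2) := by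
    have : (v : ℂ) ≠ 0 := mod_cast hv.ne'
    rw [one_mul, mul_pow, Complex.I_sq, ← Complex.ofReal_pow, div_pow, sq_sqrt hv.le]
    push_cast
    field_simp
  simp only [weightedMGF_standardized_mul_I, ← limit_eq]
  exact phase_tendsto.mul mgf_tendsto

theorem tendsto_weightedMean_standardized (hp : ∀ n, ∀ a ∈ s n, 0 ≤ p n a)
    (hp_sum : ∀ n, ∑ a ∈ s n, p n a = 1) (hv : 0 < v)
    {f : ℝ → ℝ} (hf : Continuous f) (hbdd : ∃ M : ℝ, ∀ y, |f y| ≤ M) :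
    Tendsto (fun n => weightedMean (s n) (p n) fun a => f (standardized (s n) (p n) (X n) a)) atTop
      (𝓝 (1 / √(2 * π) * ∫ y, f y * exp (-y ^ 2 / 2))) :=
  tendsto_weightedMean_gaussian hp hp_sum (tendsto_weightedMGF_standardized h hp_sum hv) hf hbdd

end StandardizedLimit

section OrbitProb

variable (ℓ n : ℕ) {x : ℝ}

/-- The probability of `K_{ℓ,n} = j` under `P_{ℓ,n,x}`. -/
noncomputable def orbitProb (x : ℝ) (j : ℕ) : ℝ :=
  Acount ℓ n j * x ^ j / ∑ i ∈ Finset.range (n + 1), (Acount ℓ n i : ℝ) * x ^ i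

lemma expectK_eq_weightedMean (x : ℝ) (g : ℕ → ℝ) :
    expectK ℓ n x g = weightedMean (Finset.range (n + 1)) (orbitProb ℓ n x) g := by
  rw [expectK, weightedMean, Finset.sum_div]
  refine Finset.sum_congr rfl fun j _ => ?_
  rw [orbitProb]
  ring

lemma expectK_standardized (x : ℝ) (f : ℝ → ℝ) :
    expectK ℓ n x (fun k => f ((k - meanK ℓ n x) / √(varK ℓ n x))) =
      weightedMean (Finset.range (n + 1)) (orbitProb ℓ n x) fun j =>
        f (standardized (Finset.range (n + 1)) (orbitProb ℓ n x) (fun i => (i : ℝ)) j) := by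
  simp only [varK, meanK, expectK_eq_weightedMean, standardized, weightedVar]

lemma orbitProb_nonneg (hx : 0 < x) (j : ℕ) : 0 ≤ orbitProb ℓ n x j := by
  unfold orbitProb
  positivity

lemma exists_Acount_pos : ∃ k ≤ n, 0 < Acount ℓ n k :=
  ⟨kappa fun _ : Fin ℓ => (1 : Equiv.Perm (Fin n)), kappa_le _,
    Nat.card_pos_iff.2 ⟨⟨⟨fun _ => 1, fun _ _ => rfl, rfl⟩⟩, inferInstance⟩⟩

lemma sum_Acount_mul_pow_pos (hx : 0 < x) :
    0 < ∑ i ∈ Finset.range (n + 1), (Acount ℓ n i : ℝ) * x ^ i := by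
  obtain ⟨k, hk, count_pos⟩ := exists_Acount_pos ℓ n
  exact Finset.sum_pos' (fun i _ => by positivity)
    ⟨k, Finset.mem_range_succ_iff.2 hk, by positivity⟩

lemma sum_orbitProb (hx : 0 < x) : ∑ j ∈ Finset.range (n + 1), orbitProb ℓ n x j = 1 := by
  simp only [orbitProb, ← Finset.sum_div]
  exact div_self (sum_Acount_mul_pow_pos ℓ n hx).ne'

lemma exp_neg_mul_orbitPolynomial_div_eq_weightedMGF (x : ℝ) {b : ℝ} (hb : b ≠ 0) (z : ℂ) :
    Complex.exp (-(z * b)) * orbitPolynomial ℓ n (x * Complex.exp (z / b)) /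
        orbitPolynomial ℓ n x =
      weightedMGF (Finset.range (n + 1)) (orbitProb ℓ n x) (fun j => (j - b ^ 2) / b) z := by
  have factorial_inv_ne_zero : 1 / (n.factorial : ℂ) ≠ 0 :=
    one_div_ne_zero (mod_cast n.factorial_ne_zero)
  rw [orbitPolynomial, orbitPolynomial, mul_left_comm, mul_div_mul_left _ _ factorial_inv_ne_zero,
    Finset.mul_sum, Finset.sum_div, weightedMGF]
  refine Finset.sum_congr rfl fun j _ => ?_
  have exponent_eq : z * ((j - b ^ 2) / b : ℝ) = -(z * b) + j * (z / b) := by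
    have : (b : ℂ) ≠ 0 := mod_cast hb
    push_cast
    field_simp
    ring
  rw [exponent_eq, Complex.exp_add, mul_pow, ← Complex.exp_nat_mul, orbitProb]
  push_cast
  ring

end OrbitProb

lemma exists_tendsto_weightedMGF_orbitProb (k : ℕ) {x : ℝ} (hx : 0 < x) :
    ∃ b : ℕ → ℝ, (∀ᶠ n in atTop, 0 < b n) ∧ ∀ z : ℂ, Tendsto
      (fun q : ℕ × ℂ => weightedMGF (Finset.range (q.1 + 1)) (orbitProb (k + 2) q.1 x)
        (fun j => (j - b q.1 ^ 2) / b q.1) q.2)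
      (atTop ×ˢ 𝓝 z) (𝓝 (Complex.exp ((1 / (k + 2) : ℝ) * z ^ 2 / 2))) := by
  have growth := (hasPowerGrowth_latticeWeight k).const_mul hx
  obtain ⟨t, ht, saddle_eq⟩ := growth.exists_saddlePoint
  have b_pos : ∀ᶠ n in atTop,
      0 < sqrtMoment (expTilt (fun m => x * latticeWeight (k + 2) m) (t n)) 0 :=
    (ht.eventually self_mem_nhdsWithin).mono fun n hn => growth.sqrtMoment_pos 0 hn
  refine ⟨_, b_pos, fun z => ?_⟩
  have isExpCoeff (y : ℂ) :
      IsExpCoeff (fun m => Complex.exp y * (x * latticeWeight (k + 2) m : ℝ))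
        (orbitPolynomial (k + 2) · (x * Complex.exp y)) := by
    convert isExpCoeff_orbitPolynomial (k + 2) (x * Complex.exp y) using 2
    push_cast
    ring
  have coeff_tendsto := growth.tendsto_exp_mul_coeff_div isExpCoeff
    (ht.comp (tendsto_fst (g := 𝓝 z))) (tendsto_fst.eventually saddle_eq) tendsto_snd
  have limit_eq : z ^ 2 / (2 * (k + 2)) = ((1 / (k + 2) : ℝ) : ℂ) * z ^ 2 / 2 := by
    push_cast
    field_simp
  rw [limit_eq] at coeff_tendsto
  refine coeff_tendsto.congr' ?_
  filter_upwards [tendsto_fst.eventually b_pos] with q hq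
  rw [Complex.exp_zero, mul_one]
  exact exp_neg_mul_orbitPolynomial_div_eq_weightedMGF _ _ x hq.ne' q.2

/-- the normalized number of joint orbits converges in distribution to the
standard Gaussian: for every bounded continuous `f : ℝ → ℝ`, the expectations converge. -/
theorem clt_in_distribution (ℓ : ℕ) (hℓ : 2 ≤ ℓ) (x : ℝ) (hx : 0 < x)
    (f : ℝ → ℝ) (hf : Continuous f) (hbdd : ∃ M : ℝ, ∀ s : ℝ, |f s| ≤ M) :
    Tendsto (fun n : ℕ =>
        expectK ℓ n x (fun k =>
          f (((k : ℝ) - meanK ℓ n x) / Real.sqrt (varK ℓ n x))))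
      atTop
      (nhds ((1 / Real.sqrt (2 * π)) * ∫ s : ℝ, f s * Real.exp (-s ^ 2 / 2))) := by
  obtain ⟨k, rfl⟩ := Nat.exists_eq_add_of_le' hℓ
  obtain ⟨b, b_pos, mgf_tendsto⟩ := exists_tendsto_weightedMGF_orbitProb k hx
  have sum_eq_one (n : ℕ) := sum_orbitProb (k + 2) n hx
  have expect_tendsto := tendsto_weightedMean_standardized (p := fun n => orbitProb (k + 2) n x)
    (X := fun n j => (j - b n ^ 2) / b n) mgf_tendsto (fun n j _ => orbitProb_nonneg _ n hx j)
    sum_eq_one (by positivity) hf hbdd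
  refine expect_tendsto.congr' ?_
  filter_upwards [b_pos] with n hb
  have orbits_eq (j : ℕ) : b n ^ 2 + b n * ((j - b n ^ 2) / b n) = j := by field_simp; ring
  have standardized_eq := standardized_add_mul (fun j : ℕ => (j - b n ^ 2) / b n) (sum_eq_one n) hb
    (b n ^ 2)
  rw [expectK_standardized, ← standardized_eq]
  simp only [orbits_eq]
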